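/- arXiv:math/0209301 — 2 statements merged into one kernel-verified Lean document; each statement's English description precedes it below -/
import Mathlib

section
/- Strongly non-degenerate coefficient functions form a Zariski open subset of the space of all coefficient functions ℂ^Δ. -/
noncomputable section

/-- The semigroup ring `ℂ[K]` of the lattice points `S = K ∩ M ⊆ ℤ^r` of a cone `K`. -/
abbrev SGA (r : ℕ) (S : AddSubmonoid (Fin r → ℤ)) : Type := AddMonoidAlgebra ℂ ↥S

/-- `S` is the set of lattice points of the rational polyhedral cone generated by the
finite set `gens`. -/
def IsConeSemigroup (r : ℕ) (S : AddSubmonoid (Fin r → ℤ))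
    (gens : Finset (Fin r → ℤ)) : Prop :=
  ∀ m : Fin r → ℤ, m ∈ S ↔ ∃ c : (Fin r → ℤ) → ℚ,
    (∀ g ∈ gens, 0 ≤ c g) ∧ ∀ i, (m i : ℚ) = ∑ g ∈ gens, c g * (g i : ℚ)

/-- The element `z_n = Σ_{m ∈ Δ} f(m) (m · n) [m]` of `ℂ[K]`. -/
def zEl {r : ℕ} {S : AddSubmonoid (Fin r → ℤ)} (Δfin : Finset ↥S)
    (f : ↥Δfin → ℂ) (n : Fin r → ℤ) : SGA r S :=
  ∑ m ∈ Δfin.attach,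
    (f m * ((∑ i, ((m : ↥S) : Fin r → ℤ) i * n i : ℤ) : ℂ)) •
      AddMonoidAlgebra.single ((m : ↥S)) (1 : ℂ)

/-- `I(n₀) = { m · n₀ : m ∈ Δ }`, the (finite) set of values of the auxiliary grading
`· n₀` on `Δ`. -/
def Igrades {r : ℕ} {S : AddSubmonoid (Fin r → ℤ)} (Δfin : Finset ↥S)
    (n₀ : Fin r → ℤ) : Finset ℤ :=
  Δfin.image fun m => ∑ i, m.val i * n₀ i

/-- The graded piece `z_{i,j}`, for `i ∈ {1,…,r}` and `j ∈ I(n₀)`: the `·n₀`-degree-`j`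
component of `z_i = Σ_{m∈Δ} f(m)(m·n_i)[m]`, namely
`z_{i,j} = Σ_{m∈Δ, m·n₀ = j} f(m)(m·n_i)[m]`. -/
def zGraded {r : ℕ} {S : AddSubmonoid (Fin r → ℤ)} (Δfin : Finset ↥S)
    (f : ↥Δfin → ℂ) (n₀ : Fin r → ℤ)
    (e : Fin r × ↥(Igrades Δfin n₀)) : SGA r S :=
  ∑ m ∈ Δfin.attach.filter
      (fun m => (∑ k, m.val.val k * n₀ k) = ((e.2 : ℤ))),
    (f m * ((m.val.val e.1 : ℤ) : ℂ)) •
      AddMonoidAlgebra.single ((m : ↥S)) (1 : ℂ)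

/-- The (total) Koszul differential for a finite family `z : ι → A` of elements of a
commutative ring `A`, on the model `Λ(⊕_ι ℂ e_i) ⊗ A ≅ (Finset ι → A)` of the Koszul
complex `Λ(⊕_i ⊕_{j∈I(n₀)} ℂ e_{i,j}) ⊗ ℂ[K]`, with signs determined by an injective
encoding `enc : ι → ℤ` of a linear order on `ι`:
`(d x)(s) = Σ_{e ∉ s} (−1)^{#{e' ∈ s : e' < e}} z_e · x(s ∪ {e})`. -/
def koszulD {A : Type*} [CommRing A] [Algebra ℂ A] {ι : Type*} [Fintype ι]
    [DecidableEq ι] (z : ι → A) (enc : ι → ℤ) :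
    (Finset ι → A) →ₗ[ℂ] (Finset ι → A) where
  toFun x := fun s => ∑ e ∈ Finset.univ \ s,
    ((-1 : A) ^ ((s.filter (fun e' => enc e' < enc e)).card)) * (z e * x (insert e s))
  map_add' x y := by
    funext s
    simp [mul_add, Finset.sum_add_distrib]
  map_smul' c x := by
    funext s
    simp [Finset.smul_sum, mul_smul_comm, smul_sub]

/-- The cohomology of an operator `D` (with `D ∘ D = 0`) on a module `V`:
`ker D / (im D ∩ ker D)`. -/
abbrev opCohomology {V : Type*} [AddCommGroup V] [Module ℂ V] (D : V →ₗ[ℂ] V) : Type _ :=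
  ↥(LinearMap.ker D) ⧸
    Submodule.comap (LinearMap.ker D).subtype (LinearMap.range D)

/-- `W(f; n₀)`: the cohomology of the Koszul complex
`Λ(⊕_i ⊕_{j∈I(n₀)} ℂ e_{i,j}) ⊗ ℂ[K]` with differential `d = Σ_{i,j} ι(e_{i,j}) z_{i,j}`. -/
abbrev Wcoh {r : ℕ} {S : AddSubmonoid (Fin r → ℤ)} (Δfin : Finset ↥S)
    (f : ↥Δfin → ℂ) (n₀ : Fin r → ℤ) : Type _ :=
  opCohomology (koszulD (zGraded Δfin f n₀)
    (fun e : Fin r × ↥(Igrades Δfin n₀) => (e.2 : ℤ) * r + (e.1 : ℤ)))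


/-- A coefficient function `f` is strongly non-degenerate if it is non-degenerate and,
for each `n₀ ∈ N`, the dimension of `W(f; n₀)` is minimal among all possible choices of
coefficient function. -/
def IsStronglyNonDeg {r : ℕ} {S : AddSubmonoid (Fin r → ℤ)} (Δfin : Finset ↥S)
    (f : ↥Δfin → ℂ) : Prop :=
  FiniteDimensional ℂ (SGA r S ⧸ Ideal.span (Set.range (zEl Δfin f))) ∧
  ∀ n₀ : Fin r → ℤ,
    FiniteDimensional ℂ (Wcoh Δfin f n₀) ∧
    ∀ g : ↥Δfin → ℂ, FiniteDimensional ℂ (Wcoh Δfin g n₀) →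
      Module.finrank ℂ (Wcoh Δfin f n₀) ≤ Module.finrank ℂ (Wcoh Δfin g n₀)

/-!
Work near a strongly non-degenerate `f₀`, with the universal coefficient function over `R = ℂ[Δ]`.
Since the quotient of `ℂ[K]` by the `z_n` is finite-dimensional at `f₀`, Nakayama's lemma provides
some `p ∈ R` with `p(f₀) ≠ 0` such that, after inverting `p`, all monomials of large degree lie in
the ideal of the universal `z_n`. Hence `f` is non-degenerate wherever `p(f) ≠ 0`.

Fix `n₀`. The `z_n` are integral combinations of the graded pieces `z_{i,j}`, multiplication by
which is null-homotopic on the Koszul complex, and the Koszul cycles over `R[1/p][K]` are finitely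
generated. So the universal complex is exact in large weights, and its null-homotopy there
specializes to every `f` with `p(f) ≠ 0`. What remains is a finite-dimensional complex whose
differential depends linearly on `f`; its rank is lower semicontinuous, so `dim W(f; n₀)` is upper
semicontinuous at `f₀`. Finally, `W(f; n₀)` depends on `n₀` only through the preorder that `· n₀`
induces on the finite set `Δ`, so a finite intersection of open sets serves all `n₀` at once.
-/

section ZariskiNeighbourhoods

variable {k σ : Type*} [Field k]

/-- The filter of Zariski neighbourhoods of the point `f₀` of the affine space `k^σ`: a set is a
neighbourhood if it contains a principal open set `{f | p(f) ≠ 0}` with `p(f₀) ≠ 0`. -/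
def zariskiNhds (f₀ : σ → k) : Filter (σ → k) where
  sets := {s | ∃ p : MvPolynomial σ k, MvPolynomial.eval f₀ p ≠ 0 ∧
    ∀ f, MvPolynomial.eval f p ≠ 0 → f ∈ s}
  univ_sets := ⟨1, by simp, fun _ _ => trivial⟩
  sets_of_superset := fun ⟨p, hp₀, hp⟩ hst => ⟨p, hp₀, fun f hf => hst (hp f hf)⟩
  inter_sets := fun ⟨p, hp₀, hp⟩ ⟨q, hq₀, hq⟩ =>
    ⟨p * q, by simpa only [map_mul] using mul_ne_zero hp₀ hq₀, fun f hf => by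
      rw [map_mul] at hf
      exact ⟨hp f (left_ne_zero_of_mul hf), hq f (right_ne_zero_of_mul hf)⟩⟩

theorem eventually_zariskiNhds {f₀ : σ → k} {Q : (σ → k) → Prop} :
    (∀ᶠ f in zariskiNhds f₀, Q f) ↔ ∃ p : MvPolynomial σ k, MvPolynomial.eval f₀ p ≠ 0 ∧
      ∀ f, MvPolynomial.eval f p ≠ 0 → Q f :=
  Iff.rfl

theorem of_eventually_zariskiNhds {f₀ : σ → k} {Q : (σ → k) → Prop}
    (h : ∀ᶠ f in zariskiNhds f₀, Q f) : Q f₀ := by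
  obtain ⟨p, hp₀, hp⟩ := eventually_zariskiNhds.1 h
  exact hp f₀ hp₀

theorem exists_polynomials_iff_of_eventually {Q : (σ → k) → Prop}
    (hQ : ∀ f₀, Q f₀ → ∀ᶠ f in zariskiNhds f₀, Q f) :
    ∃ P : Set (MvPolynomial σ k), ∀ f, Q f ↔ ∃ p ∈ P, MvPolynomial.eval f p ≠ 0 := by
  refine ⟨{p | ∀ f, MvPolynomial.eval f p ≠ 0 → Q f}, fun f => ⟨fun hf => ?_, ?_⟩⟩
  · obtain ⟨p, hp₀, hp⟩ := eventually_zariskiNhds.1 (hQ f hf)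
    exact ⟨p, hp, hp₀⟩
  · rintro ⟨p, hp, hpf⟩
    exact hp f hpf

variable [Finite σ]

theorem exists_eval_eq_linearMap (φ : (σ → k) →ₗ[k] k) :
    ∃ p : MvPolynomial σ k, ∀ f, MvPolynomial.eval f p = φ f := by
  classical
  have := Fintype.ofFinite σ
  refine ⟨∑ m, MvPolynomial.C (φ fun m' => if m = m' then 1 else 0) * MvPolynomial.X m,
    fun f => ?_⟩
  rw [LinearMap.pi_apply_eq_sum_univ φ f]
  simp only [map_sum, map_mul, MvPolynomial.eval_C, MvPolynomial.eval_X, smul_eq_mul, mul_comm]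

theorem exists_eval_eq_det {E : Type*} [AddCommGroup E] [Module k E] [FiniteDimensional k E]
    (L : (σ → k) →ₗ[k] Module.End k E) :
    ∃ p : MvPolynomial σ k, ∀ f, MvPolynomial.eval f p = LinearMap.det (L f) := by
  let b := Module.finBasis k E
  choose P hP using fun i j => exists_eval_eq_linearMap
    (Matrix.entryLinearMap k k i j ∘ₗ (LinearMap.toMatrix b b).toLinearMap ∘ₗ L)
  refine ⟨(Matrix.of P).det, fun f => ?_⟩
  rw [RingHom.map_det, ← LinearMap.det_toMatrix b]
  congr 1
  ext i j
  exact hP i j f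

theorem eventually_isUnit_of_isUnit {E : Type*} [AddCommGroup E] [Module k E]
    [FiniteDimensional k E] (L : (σ → k) →ₗ[k] Module.End k E) {f₀ : σ → k}
    (h₀ : IsUnit (L f₀)) : ∀ᶠ f in zariskiNhds f₀, IsUnit (L f) := by
  obtain ⟨p, hp⟩ := exists_eval_eq_det L
  refine eventually_zariskiNhds.2 ⟨p, ?_, fun f hf => ?_⟩
  · rw [hp]
    exact ((LinearMap.isUnit_iff_isUnit_det _).1 h₀).ne_zero
  · rw [hp] at hf
    exact (LinearMap.isUnit_iff_isUnit_det _).2 hf.isUnit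

theorem eventually_finrank_range_le {V W : Type*} [AddCommGroup V] [Module k V]
    [FiniteDimensional k V] [AddCommGroup W] [Module k W]
    (Φ : (σ → k) →ₗ[k] V →ₗ[k] W) (f₀ : σ → k) :
    ∀ᶠ f in zariskiNhds f₀,
      Module.finrank k (LinearMap.range (Φ f₀)) ≤ Module.finrank k (LinearMap.range (Φ f)) := by
  let E := LinearMap.range (Φ f₀)
  obtain ⟨s, hs⟩ := (Φ f₀).rangeRestrict.exists_rightInverse_of_surjective
    (Φ f₀).range_rangeRestrict
  obtain ⟨π, hπ⟩ := E.subtype.exists_leftInverse_of_injective E.ker_subtype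
  let L : (σ → k) →ₗ[k] Module.End k E := (LinearMap.compRight k π ∘ₗ LinearMap.lcomp k W s) ∘ₗ Φ
  have hs' : Φ f₀ ∘ₗ s = E.subtype :=
    LinearMap.ext fun e => congrArg Subtype.val (LinearMap.congr_fun hs e)
  have hL₀ : L f₀ = 1 := (congrArg (π ∘ₗ ·) hs').trans hπ
  filter_upwards [eventually_isUnit_of_isUnit L (hL₀ ▸ isUnit_one)] with f hf
  have hsurj : Function.Surjective (π ∘ₗ (LinearMap.range (Φ f)).subtype) := fun y => by
    obtain ⟨x, rfl⟩ := ((Module.End.isUnit_iff _).1 hf).2 y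
    exact ⟨⟨Φ f (s x), s x, rfl⟩, rfl⟩
  exact LinearMap.finrank_le_finrank_of_surjective hsurj

end ZariskiNeighbourhoods

section OperatorCohomology

variable {V V' : Type*} [AddCommGroup V] [Module ℂ V] [AddCommGroup V'] [Module ℂ V']

theorem finrank_opCohomology_add_two_mul [FiniteDimensional ℂ V] {D : V →ₗ[ℂ] V}
    (hD : ∀ x, D (D x) = 0) :
    Module.finrank ℂ (opCohomology D) + 2 * Module.finrank ℂ (LinearMap.range D) =
      Module.finrank ℂ V := by
  have hle : LinearMap.range D ≤ LinearMap.ker D := by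
    rintro _ ⟨x, rfl⟩
    exact hD x
  have hquot := Submodule.finrank_quotient_add_finrank
    ((LinearMap.range D).comap (LinearMap.ker D).subtype)
  rw [(Submodule.comapSubtypeEquivOfLe hle).finrank_eq] at hquot
  have hrank := D.finrank_range_add_finrank_ker
  lia

/-- A chain map that is injective and surjective on cohomology induces an isomorphism. -/
def opCohomologyEquiv {D : V →ₗ[ℂ] V} {D' : V' →ₗ[ℂ] V'} (φ : V →ₗ[ℂ] V')
    (hφ : ∀ x, D' (φ x) = φ (D x))
    (hinj : ∀ x, D x = 0 → φ x ∈ LinearMap.range D' → x ∈ LinearMap.range D)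
    (hsurj : ∀ y, D' y = 0 → ∃ x, D x = 0 ∧ y - φ x ∈ LinearMap.range D') :
    opCohomology D ≃ₗ[ℂ] opCohomology D' :=
  have hker : ∀ x ∈ LinearMap.ker D, φ x ∈ LinearMap.ker D' := fun x hx => by
    rw [LinearMap.mem_ker, hφ, LinearMap.mem_ker.1 hx, map_zero]
  have hrange : (LinearMap.range D).comap (LinearMap.ker D).subtype ≤
      ((LinearMap.range D').comap (LinearMap.ker D').subtype).comap (φ.restrict hker) := by
    rintro ⟨_, _⟩ ⟨y, rfl⟩
    exact ⟨φ y, hφ y⟩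
  LinearEquiv.ofBijective (Submodule.mapQ _ _ (φ.restrict hker) hrange) <| by
    constructor
    · rw [injective_iff_map_eq_zero]
      intro c hc
      obtain ⟨⟨x, hx⟩, rfl⟩ := Submodule.Quotient.mk_surjective _ c
      rw [Submodule.mapQ_apply, Submodule.Quotient.mk_eq_zero] at hc
      exact (Submodule.Quotient.mk_eq_zero _).2 (hinj x hx hc)
    · intro c
      obtain ⟨⟨y, hy⟩, rfl⟩ := Submodule.Quotient.mk_surjective _ c
      obtain ⟨x, hx, hxy⟩ := hsurj y hy
      refine ⟨Submodule.Quotient.mk ⟨x, hx⟩, Eq.symm ?_⟩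
      exact (Submodule.Quotient.eq _).2 hxy

/-- The compression of `D` to the range of `q`, as a linear function of `D`. -/
def compression (q : V →ₗ[ℂ] V) : Module.End ℂ V →ₗ[ℂ] Module.End ℂ (LinearMap.range q) :=
  LinearMap.compRight ℂ q.rangeRestrict ∘ₗ LinearMap.lcomp ℂ V (LinearMap.range q).subtype

theorem coe_compression_apply {q D : V →ₗ[ℂ] V} (hq : ∀ x, q (q x) = q x)
    (hqD : ∀ x, D (q x) = q (D x)) (x : LinearMap.range q) :
    (compression q D x : V) = D x := by
  obtain ⟨_, y, rfl⟩ := x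
  change q (D (q y)) = D (q y)
  rw [← hqD, hq]

/-- The cohomology of `D` is carried by the range of a projection `q` that commutes with `D` and is
the identity on cohomology. -/
def opCohomologyCompressionEquiv {q D : V →ₗ[ℂ] V} (hq : ∀ x, q (q x) = q x)
    (hqD : ∀ x, D (q x) = q (D x)) (hexact : ∀ x, D x = 0 → x - q x ∈ LinearMap.range D) :
    opCohomology (compression q D) ≃ₗ[ℂ] opCohomology D :=
  opCohomologyEquiv (LinearMap.range q).subtype
    (fun x => (coe_compression_apply hq hqD x).symm)
    (by
      rintro ⟨_, x, rfl⟩ - ⟨y, hy⟩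
      refine ⟨⟨q y, y, rfl⟩, Subtype.ext ?_⟩
      rw [coe_compression_apply hq hqD, hqD, hy]
      exact hq x)
    (fun y hy => by
      refine ⟨⟨q y, y, rfl⟩, Subtype.ext ?_, hexact y hy⟩
      rw [coe_compression_apply hq hqD, hqD, hy, map_zero, ZeroMemClass.coe_zero])

theorem eventually_finrank_opCohomology_le_of_finiteDimensional {σ : Type*} [Finite σ]
    [FiniteDimensional ℂ V] (D : (σ → ℂ) →ₗ[ℂ] Module.End ℂ V) (hD : ∀ f x, D f (D f x) = 0)
    (f₀ : σ → ℂ) :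
    ∀ᶠ f in zariskiNhds f₀,
      Module.finrank ℂ (opCohomology (D f)) ≤ Module.finrank ℂ (opCohomology (D f₀)) := by
  filter_upwards [eventually_finrank_range_le D f₀] with f hf
  have h₀ := finrank_opCohomology_add_two_mul (hD f₀)
  have h := finrank_opCohomology_add_two_mul (hD f)
  lia

theorem eventually_finrank_opCohomology_le {σ : Type*} [Finite σ]
    (D : (σ → ℂ) →ₗ[ℂ] Module.End ℂ V) (hD : ∀ f x, D f (D f x) = 0)
    {q : V →ₗ[ℂ] V} [FiniteDimensional ℂ (LinearMap.range q)] (hq : ∀ x, q (q x) = q x)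
    (hqD : ∀ f x, D f (q x) = q (D f x)) {f₀ : σ → ℂ}
    (hexact : ∀ᶠ f in zariskiNhds f₀, ∀ x, D f x = 0 → x - q x ∈ LinearMap.range (D f)) :
    ∀ᶠ f in zariskiNhds f₀, FiniteDimensional ℂ (opCohomology (D f)) ∧
      Module.finrank ℂ (opCohomology (D f)) ≤ Module.finrank ℂ (opCohomology (D f₀)) := by
  have hsq : ∀ f x, compression q (D f) (compression q (D f) x) = 0 := fun f x => by
    ext
    rw [coe_compression_apply hq (hqD f), coe_compression_apply hq (hqD f), hD,
      ZeroMemClass.coe_zero]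
  have e₀ := opCohomologyCompressionEquiv hq (hqD f₀) (of_eventually_zariskiNhds hexact)
  filter_upwards [hexact, eventually_finrank_opCohomology_le_of_finiteDimensional
    (compression q ∘ₗ D) hsq f₀] with f hf hle
  have e := opCohomologyCompressionEquiv hq (hqD f) hf
  refine ⟨Module.Finite.equiv e, ?_⟩
  rwa [← e.finrank_eq, ← e₀.finrank_eq]

end OperatorCohomology

section Koszul

variable {A ι α : Type*} [CommRing A] [LinearOrder α]

/-- The sign `(−1)^{#{e' ∈ s : e' < e}}` of the Koszul complex, for the order on `ι` pulled back
along `enc`. -/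
def koszulSign (A : Type*) [CommRing A] (enc : ι → α) (s : Finset ι) (e : ι) : A :=
  (-1) ^ (s.filter fun e' => enc e' < enc e).card

theorem koszulSign_mul_self (enc : ι → α) (s : Finset ι) (e : ι) :
    koszulSign A enc s e * koszulSign A enc s e = 1 := by
  rw [koszulSign, ← mul_pow, neg_one_mul, neg_neg, one_pow]

variable [DecidableEq ι]

theorem koszulSign_insert (enc : ι → α) {s : Finset ι} {f : ι} (hf : f ∉ s) (e : ι) :
    koszulSign A enc (insert f s) e =
      (if enc f < enc e then -1 else 1) * koszulSign A enc s e := by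
  unfold koszulSign
  rw [Finset.filter_insert]
  split_ifs
  · rw [Finset.card_insert_of_notMem fun h => hf (Finset.mem_filter.1 h).1, pow_succ']
  · rw [one_mul]

theorem koszulSign_insert_self (enc : ι → α) {s : Finset ι} {e : ι} (he : e ∉ s) :
    koszulSign A enc (insert e s) e = koszulSign A enc s e := by
  rw [koszulSign_insert enc he, if_neg (lt_irrefl _), one_mul]

theorem koszulSign_mul_insert (enc : ι → α) {s : Finset ι} {e f : ι}
    (hef : enc e ≠ enc f) (he : e ∉ s) (hf : f ∉ s) :
    koszulSign A enc s e * koszulSign A enc (insert e s) f =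
      -(koszulSign A enc s f * koszulSign A enc (insert f s) e) := by
  rw [koszulSign_insert enc hf, koszulSign_insert enc he]
  rcases hef.lt_or_gt with h | h <;> rw [if_pos h, if_neg h.not_gt] <;> ring

theorem koszulSign_insert_mul_insert (enc : ι → α) {s : Finset ι} {e f : ι}
    (hef : enc e ≠ enc f) (he : e ∉ s) (hf : f ∉ s) :
    koszulSign A enc (insert f s) e * koszulSign A enc (insert e s) f =
      -(koszulSign A enc s e * koszulSign A enc s f) := by
  rw [koszulSign_insert enc hf, koszulSign_insert enc he]
  rcases hef.lt_or_gt with h | h <;> rw [if_pos h, if_neg h.not_gt] <;> ring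

/-- Contraction with the `e`-th dual basis vector on the exterior algebra `Finset ι → A` of the
free module on `ι`. -/
def contraction (enc : ι → α) (e : ι) : Module.End A (Finset ι → A) :=
  LinearMap.pi fun s =>
    if e ∈ s then 0 else koszulSign A enc s e • LinearMap.proj (insert e s)

/-- Exterior multiplication by the `e`-th basis vector on the exterior algebra `Finset ι → A` of
the free module on `ι`. -/
def wedge (enc : ι → α) (e : ι) : Module.End A (Finset ι → A) :=
  LinearMap.pi fun s =>
    if e ∈ s then koszulSign A enc s e • LinearMap.proj (s.erase e) else 0

theorem contraction_apply_of_mem (enc : ι → α) {e : ι} {s : Finset ι} (he : e ∈ s)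
    (x : Finset ι → A) : contraction enc e x s = 0 := by
  simp only [contraction, LinearMap.pi_apply, if_pos he, LinearMap.zero_apply]

theorem contraction_apply_of_notMem (enc : ι → α) {e : ι} {s : Finset ι} (he : e ∉ s)
    (x : Finset ι → A) :
    contraction enc e x s = koszulSign A enc s e * x (insert e s) := by
  simp only [contraction, LinearMap.pi_apply, if_neg he, LinearMap.smul_apply,
    LinearMap.proj_apply, smul_eq_mul]

theorem wedge_apply_of_notMem (enc : ι → α) {e : ι} {s : Finset ι} (he : e ∉ s)
    (x : Finset ι → A) : wedge enc e x s = 0 := by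
  simp only [wedge, LinearMap.pi_apply, if_neg he, LinearMap.zero_apply]

theorem wedge_apply_insert (enc : ι → α) {e : ι} {s : Finset ι} (he : e ∉ s)
    (x : Finset ι → A) :
    wedge enc e x (insert e s) = koszulSign A enc s e * x s := by
  simp only [wedge, LinearMap.pi_apply, if_pos (Finset.mem_insert_self e s),
    LinearMap.smul_apply, LinearMap.proj_apply, smul_eq_mul, Finset.erase_insert he,
    koszulSign_insert_self enc he]

theorem contraction_contraction_self (enc : ι → α) (e : ι) (x : Finset ι → A) :
    contraction enc e (contraction enc e x) = 0 := by
  funext s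
  by_cases he : e ∈ s
  · exact contraction_apply_of_mem enc he _
  · rw [contraction_apply_of_notMem enc he,
      contraction_apply_of_mem enc (Finset.mem_insert_self e s), mul_zero, Pi.zero_apply]

theorem contraction_contraction_add (enc : ι → α) {e f : ι} (hef : enc e ≠ enc f)
    (x : Finset ι → A) :
    contraction enc e (contraction enc f x) + contraction enc f (contraction enc e x) = 0 := by
  have hne : e ≠ f := ne_of_apply_ne enc hef
  funext s
  rw [Pi.add_apply, Pi.zero_apply]
  by_cases he : e ∈ s
  · rw [contraction_apply_of_mem enc he, zero_add]
    by_cases hf : f ∈ s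
    · rw [contraction_apply_of_mem enc hf]
    · rw [contraction_apply_of_notMem enc hf,
        contraction_apply_of_mem enc (Finset.mem_insert_of_mem he), mul_zero]
  by_cases hf : f ∈ s
  · rw [contraction_apply_of_mem enc hf, contraction_apply_of_notMem enc he,
      contraction_apply_of_mem enc (Finset.mem_insert_of_mem hf), mul_zero, add_zero]
  have he' : e ∉ insert f s := by simp [hne, he]
  have hf' : f ∉ insert e s := by simp [hne.symm, hf]
  rw [contraction_apply_of_notMem enc he, contraction_apply_of_notMem enc hf',
    contraction_apply_of_notMem enc hf, contraction_apply_of_notMem enc he', Finset.insert_comm]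
  linear_combination x (insert e (insert f s)) *
    koszulSign_mul_insert (A := A) enc hef he hf

theorem contraction_wedge_add_self (enc : ι → α) (e : ι) (x : Finset ι → A) :
    contraction enc e (wedge enc e x) + wedge enc e (contraction enc e x) = x := by
  funext s
  by_cases he : e ∈ s
  · rw [← Finset.insert_erase he]
    have he' := Finset.notMem_erase e s
    rw [Pi.add_apply, contraction_apply_of_mem enc (Finset.mem_insert_self _ _),
      wedge_apply_insert enc he', contraction_apply_of_notMem enc he', ← mul_assoc,
      koszulSign_mul_self, one_mul, zero_add]
  · rw [Pi.add_apply, wedge_apply_of_notMem enc he, contraction_apply_of_notMem enc he,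
      wedge_apply_insert enc he, ← mul_assoc, koszulSign_mul_self, one_mul, add_zero]

theorem contraction_wedge_add (enc : ι → α) {e f : ι} (hef : enc e ≠ enc f)
    (x : Finset ι → A) :
    contraction enc e (wedge enc f x) + wedge enc f (contraction enc e x) = 0 := by
  have hne : e ≠ f := ne_of_apply_ne enc hef
  funext s
  rw [Pi.add_apply, Pi.zero_apply]
  by_cases hf : f ∈ s
  · obtain ⟨t, hft, rfl⟩ : ∃ t, f ∉ t ∧ insert f t = s :=
      ⟨s.erase f, Finset.notMem_erase f s, Finset.insert_erase hf⟩
    rw [wedge_apply_insert enc hft]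
    by_cases he : e ∈ t
    · rw [contraction_apply_of_mem enc (Finset.mem_insert_of_mem he),
        contraction_apply_of_mem enc he, mul_zero, add_zero]
    · have he' : e ∉ insert f t := by simp [hne, he]
      have hf' : f ∉ insert e t := by simp [hne.symm, hft]
      rw [contraction_apply_of_notMem enc he', Finset.insert_comm, wedge_apply_insert enc hf',
        contraction_apply_of_notMem enc he]
      linear_combination x (insert e t) * koszulSign_insert_mul_insert (A := A) enc hef he hft
  · rw [wedge_apply_of_notMem enc hf, add_zero]
    by_cases he : e ∈ s
    · exact contraction_apply_of_mem enc he _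
    · have hf' : f ∉ insert e s := by simp [hne.symm, hf]
      rw [contraction_apply_of_notMem enc he, wedge_apply_of_notMem enc hf', mul_zero]

variable [Fintype ι]

/-- The differential `∑ₑ zₑ ι(e)` of the Koszul complex of the family `z`. -/
def koszulDiff (enc : ι → α) (z : ι → A) : Module.End A (Finset ι → A) :=
  ∑ e, z e • contraction enc e

theorem koszulDiff_apply (enc : ι → α) (z : ι → A) (x : Finset ι → A) :
    koszulDiff enc z x = ∑ e, z e • contraction enc e x := by
  simp only [koszulDiff, LinearMap.sum_apply, LinearMap.smul_apply]

theorem koszulDiff_koszulDiff {enc : ι → α} (henc : Function.Injective enc) (z : ι → A)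
    (x : Finset ι → A) : koszulDiff enc z (koszulDiff enc z x) = 0 := by
  have hdouble : koszulDiff enc z (koszulDiff enc z x) =
      ∑ p : ι × ι, (z p.1 * z p.2) • contraction enc p.2 (contraction enc p.1 x) := by
    simp only [koszulDiff_apply, map_sum, map_smul, Finset.smul_sum, smul_smul,
      Fintype.sum_prod_type]
  rw [hdouble]
  refine Finset.sum_involution (fun p _ => p.swap) (fun ⟨e, f⟩ _ => ?_) (fun ⟨e, f⟩ _ h => ?_)
    (fun _ _ => Finset.mem_univ _) (fun _ _ => rfl)
  · by_cases hef : e = f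
    · subst hef
      simp only [Prod.swap_prod_mk, contraction_contraction_self, smul_zero, add_zero]
    · rw [Prod.swap_prod_mk, mul_comm (z f), ← smul_add,
        contraction_contraction_add enc (henc.ne (Ne.symm hef)), smul_zero]
  · contrapose! h
    obtain rfl : f = e := congrArg Prod.fst h
    rw [contraction_contraction_self, smul_zero]

theorem koszulDiff_wedge_add {enc : ι → α} (henc : Function.Injective enc) (z : ι → A) (f : ι)
    (x : Finset ι → A) :
    koszulDiff enc z (wedge enc f x) + wedge enc f (koszulDiff enc z x) = z f • x := by
  simp only [koszulDiff_apply, map_sum, map_smul, ← Finset.sum_add_distrib, ← smul_add]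
  rw [Finset.sum_eq_single f (fun e _ hef => by
    rw [contraction_wedge_add enc (henc.ne hef), smul_zero])
    fun h => absurd (Finset.mem_univ f) h, contraction_wedge_add_self]

theorem smul_mem_range_koszulDiff {enc : ι → α} (henc : Function.Injective enc) {z : ι → A}
    {a : A} (ha : a ∈ Ideal.span (Set.range z)) {x : Finset ι → A}
    (hx : koszulDiff enc z x = 0) : a • x ∈ LinearMap.range (koszulDiff enc z) := by
  have hle : Ideal.span (Set.range z) ≤
      (LinearMap.range (koszulDiff enc z)).comap (LinearMap.toSpanSingleton A _ x) := by
    rw [Ideal.span_le]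
    rintro _ ⟨f, rfl⟩
    have hwedge := koszulDiff_wedge_add henc z f x
    rw [hx, map_zero, add_zero] at hwedge
    exact ⟨wedge enc f x, hwedge⟩
  exact hle ha

theorem koszulD_eq_koszulDiff [Algebra ℂ A] (z : ι → A) (enc : ι → ℤ) :
    koszulD z enc = (koszulDiff enc z).restrictScalars ℂ := by
  refine LinearMap.ext fun x => funext fun s => ?_
  rw [LinearMap.restrictScalars_apply, koszulDiff_apply, Finset.sum_apply]
  refine Finset.sum_subset_zero_on_sdiff (Finset.subset_univ _) (fun e he => ?_) fun e he => ?_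
  · rw [Pi.smul_apply, contraction_apply_of_mem enc (by simpa using he), smul_zero]
  · rw [Pi.smul_apply, contraction_apply_of_notMem enc (by simpa using he), smul_eq_mul,
      mul_left_comm]
    rfl

theorem koszulDiff_comp_equiv {ι' : Type*} [Fintype ι'] [DecidableEq ι'] (σ : ι ≃ ι')
    {enc : ι → α} {enc' : ι' → α} (henc : ∀ e f, enc' (σ e) < enc' (σ f) ↔ enc e < enc f)
    (z : ι' → A) (x : Finset ι' → A) (s : Finset ι) :
    koszulDiff enc (z ∘ σ) (fun t => x (t.map σ.toEmbedding)) s =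
      koszulDiff enc' z x (s.map σ.toEmbedding) := by
  rw [koszulDiff_apply, koszulDiff_apply, Finset.sum_apply, Finset.sum_apply, ← σ.sum_comp]
  refine Finset.sum_congr rfl fun e _ => ?_
  have hsign : koszulSign A enc' (s.map σ.toEmbedding) (σ e) = koszulSign A enc s e := by
    simp only [koszulSign, Finset.filter_map, Finset.card_map, Function.comp_def,
      Equiv.coe_toEmbedding, henc]
  rw [Pi.smul_apply, Pi.smul_apply, Function.comp_apply]
  by_cases he : e ∈ s
  · have he' : σ e ∈ s.map σ.toEmbedding := by simpa using he
    rw [contraction_apply_of_mem enc he, contraction_apply_of_mem enc' he']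
  · have he' : σ e ∉ s.map σ.toEmbedding := by simpa using he
    rw [contraction_apply_of_notMem enc he, contraction_apply_of_notMem enc' he', hsign,
      Finset.map_insert]
    rfl

end Koszul

section ContractingHomotopy

variable {R V κ : Type*} [CommRing R] [AddCommGroup V] [Module R V]

/-- The homotopy is built level by level: on a basis vector of level `n` it is a primitive of the
cycle `T (b i - h (d (b i)))`, where `h` is the homotopy on the lower levels. -/
theorem exists_nullHomotopy_of_level_lt (b : Module.Basis κ R V) (level : κ → ℕ)
    {d T : Module.End R V} (hd : ∀ x, d (d x) = 0) (hT : ∀ x, T (T x) = T x)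
    (hdT : ∀ x, d (T x) = T (d x))
    (hlevel : ∀ i, d (b i) ∈ Submodule.span R (b '' {j | level j < level i}))
    (hexact : ∀ x, d x = 0 → T x ∈ LinearMap.range d) (n : ℕ) :
    ∃ h : Module.End R V, ∀ i, level i < n → d (h (b i)) + h (d (b i)) = T (b i) := by
  induction n with
  | zero => exact ⟨0, fun i hi => absurd hi (Nat.not_lt_zero _)⟩
  | succ n ih =>
    obtain ⟨h, hh⟩ := ih
    have hh_span : Set.EqOn (d ∘ₗ h + h ∘ₗ d) T (Submodule.span R (b '' {i | level i < n})) :=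
      LinearMap.eqOn_span (Set.forall_mem_image.2 fun i hi => hh i hi)
    have hprimitive : ∀ i, level i = n → ∃ y, d y = T (b i - h (d (b i))) := by
      rintro i rfl
      have hdb : d (h (d (b i))) + h (d (d (b i))) = T (d (b i)) := hh_span (hlevel i)
      rw [hd, map_zero, add_zero] at hdb
      obtain ⟨y, hy⟩ := hexact (T (b i - h (d (b i)))) (by
        rw [hdT, map_sub, hdb, map_sub, hT, sub_self])
      exact ⟨y, hy.trans (hT _)⟩
    choose! y hy using hprimitive
    let h' : Module.End R V := b.constr R fun i => if level i < n then T (h (b i)) else y i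
    have hh'_span : Set.EqOn h' (T ∘ₗ h) (Submodule.span R (b '' {i | level i < n})) :=
      LinearMap.eqOn_span (Set.forall_mem_image.2 fun i hi =>
        (b.constr_basis R _ i).trans (if_pos hi))
    refine ⟨h', fun i hi => ?_⟩
    rcases Nat.lt_succ_iff_lt_or_eq.1 hi with hlt | heq
    · have hdb : d (b i) ∈ Submodule.span R (b '' {i | level i < n}) :=
        Submodule.span_mono (Set.image_mono fun j hj => lt_trans hj hlt) (hlevel i)
      rw [hh'_span hdb, hh'_span (Submodule.subset_span ⟨i, hlt, rfl⟩), LinearMap.comp_apply,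
        LinearMap.comp_apply, hdT, ← map_add, hh i hlt, hT]
    · have hdb : d (b i) ∈ Submodule.span R (b '' {i | level i < n}) := heq ▸ hlevel i
      have hb : h' (b i) = y i := (b.constr_basis R _ i).trans (if_neg heq.not_lt)
      rw [hh'_span hdb, hb, LinearMap.comp_apply, hy i heq, map_sub, sub_add_cancel]

theorem exists_nullHomotopy_of_idempotent (b : Module.Basis κ R V) {level : κ → ℕ} {n : ℕ}
    (hn : ∀ i, level i < n) {d T : Module.End R V} (hd : ∀ x, d (d x) = 0) (hT : ∀ x, T (T x) = T x)
    (hdT : ∀ x, d (T x) = T (d x))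
    (hlevel : ∀ i, d (b i) ∈ Submodule.span R (b '' {j | level j < level i}))
    (hexact : ∀ x, d x = 0 → T x ∈ LinearMap.range d) :
    ∃ h : Module.End R V, ∀ x, d (h x) + h (d x) = T x := by
  obtain ⟨h, hh⟩ := exists_nullHomotopy_of_level_lt b level hd hT hdT hlevel hexact n
  have heq : d ∘ₗ h + h ∘ₗ d = T := b.ext fun i => hh i (hn i)
  exact ⟨h, LinearMap.congr_fun heq⟩

end ContractingHomotopy

section SemigroupRing

open AddMonoidAlgebra

open scoped Pointwise

section Grading

variable {R M : Type*} [CommRing R] [AddCommMonoid M] (deg : M →+ ℤ)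

open Classical in
/-- The projection of the semigroup ring onto the span of the monomials with degree in `P`. -/
def degProj (P : Set ℤ) : R[M] →ₗ[R] R[M] :=
  (coeffLinearEquiv R).symm.toLinearMap ∘ₗ (Finsupp.supported R R (deg ⁻¹' P)).subtype ∘ₗ
    Finsupp.restrictDom R R (deg ⁻¹' P) ∘ₗ (coeffLinearEquiv R).toLinearMap

open Classical in
theorem coeff_degProj (P : Set ℤ) (x : R[M]) (m : M) :
    (degProj deg P x).coeff m = if deg m ∈ P then x.coeff m else 0 :=
  Finsupp.filter_apply _ _ _

open Classical in
theorem degProj_single (P : Set ℤ) (m : M) (c : R) :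
    degProj deg P (single m c) = if deg m ∈ P then single m c else 0 := by
  ext m'
  rw [coeff_degProj]
  rcases eq_or_ne m m' with rfl | hne
  · split_ifs <;> rfl
  · split_ifs <;> simp [Finsupp.single_eq_of_ne' hne]

theorem degProj_single_mul (P : Set ℤ) (m : M) (c : R) (y : R[M]) :
    degProj deg P (single m c * y) = single m c * degProj deg ((· + deg m) ⁻¹' P) y := by
  induction y using AddMonoidAlgebra.induction_linear with
  | zero => rw [mul_zero, map_zero, map_zero, mul_zero]
  | add y₁ y₂ h₁ h₂ => rw [mul_add, map_add, map_add, mul_add, h₁, h₂]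
  | single m' c' =>
    have hmem : deg (m + m') ∈ P ↔ deg m' ∈ (· + deg m) ⁻¹' P := by
      rw [map_add, add_comm, Set.mem_preimage]
    rw [single_mul_single, degProj_single, degProj_single, mul_ite, mul_zero, single_mul_single]
    classical exact if_congr hmem rfl rfl

theorem degProj_mul {δ : ℤ} {a : R[M]} (ha : a ∈ gradeBy R deg δ) (P : Set ℤ) (y : R[M]) :
    degProj deg P (a * y) = a * degProj deg ((· + δ) ⁻¹' P) y := by
  have hsum : ∑ m ∈ a.coeff.support, single m (a.coeff m) = a := sum_coeff_single a
  rw [← hsum, Finset.sum_mul, Finset.sum_mul, map_sum]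
  refine Finset.sum_congr rfl fun m hm => ?_
  rw [degProj_single_mul, (mem_gradeBy_iff _ _ _ _).1 ha hm]

theorem degProj_mem_span {s : Set R[M]} (hs : ∀ a ∈ s, ∃ δ, a ∈ gradeBy R deg δ) {x : R[M]}
    (hx : x ∈ Ideal.span s) (P : Set ℤ) : degProj deg P x ∈ Ideal.span s := by
  induction hx using Submodule.span_induction generalizing P with
  | mem a ha =>
    obtain ⟨δ, hδ⟩ := hs a ha
    rw [← mul_one a, degProj_mul deg hδ]
    exact Ideal.mul_mem_right _ _ (Ideal.subset_span ha)
  | zero => simp only [map_zero, Submodule.zero_mem]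
  | add x y _ _ hx hy => exact map_add (degProj deg P) x y ▸ add_mem (hx P) (hy P)
  | smul a x _ hx =>
    have hsum : ∑ m ∈ a.coeff.support, single m (a.coeff m) = a := sum_coeff_single a
    rw [smul_eq_mul, ← hsum, Finset.sum_mul, map_sum]
    refine sum_mem fun m _ => ?_
    rw [degProj_single_mul]
    exact Ideal.mul_mem_left _ _ (hx _)

theorem degProj_mapRingHom {k : Type*} [CommRing k] (ρ : R →+* k) (P : Set ℤ) (x : R[M]) :
    degProj deg P (mapRingHom M ρ x) = mapRingHom M ρ (degProj deg P x) := by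
  ext m
  rw [coeff_degProj, coeff_mapRingHom, coeff_mapRingHom, coeff_degProj, apply_ite ρ, map_zero]

variable {ι : Type*}

/-- The projection of the Koszul complex onto the span of the elements `[m] e_s` whose weight
`deg m + #s` lies in `P`. The weight is the grading that the Koszul differential of a family of
elements of degree one preserves. -/
def weightProj (P : Set ℤ) : (Finset ι → R[M]) →ₗ[R] (Finset ι → R[M]) :=
  LinearMap.pi fun s => degProj deg ((· + (s.card : ℤ)) ⁻¹' P) ∘ₗ LinearMap.proj s

theorem weightProj_apply (P : Set ℤ) (x : Finset ι → R[M]) (s : Finset ι) :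
    weightProj deg P x s = degProj deg ((· + (s.card : ℤ)) ⁻¹' P) (x s) :=
  rfl

open Classical in
theorem coeff_weightProj_apply (P : Set ℤ) (x : Finset ι → R[M]) (s : Finset ι) (m : M) :
    (weightProj deg P x s).coeff m = if deg m + s.card ∈ P then (x s).coeff m else 0 :=
  coeff_degProj deg _ (x s) m

theorem weightProj_weightProj (P : Set ℤ) (x : Finset ι → R[M]) :
    weightProj deg P (weightProj deg P x) = weightProj deg P x := by
  funext s
  ext m
  simp only [coeff_weightProj_apply]
  split_ifs <;> rfl

theorem sub_weightProj (P : Set ℤ) (x : Finset ι → R[M]) :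
    x - weightProj deg P x = weightProj deg Pᶜ x := by
  funext s
  ext m
  rw [Pi.sub_apply, coeff_sub, Finsupp.sub_apply, coeff_weightProj_apply, coeff_weightProj_apply]
  by_cases hm : deg m + s.card ∈ P
  · rw [if_pos hm, if_neg (Set.notMem_compl_iff.2 hm), sub_self]
  · rw [if_neg hm, if_pos (Set.mem_compl hm), sub_zero]

theorem weightProj_single_smul (P : Set ℤ) (m : M) (c : R) (x : Finset ι → R[M]) :
    weightProj deg P (single m c • x) = single m c • weightProj deg ((· + deg m) ⁻¹' P) x := by
  funext s
  rw [Pi.smul_apply, weightProj_apply, weightProj_apply, Pi.smul_apply, smul_eq_mul, smul_eq_mul,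
    degProj_single_mul]
  simp only [Set.preimage_preimage, add_right_comm]

theorem finiteDimensional_range_weightProj [Finite ι] {k : Type*} [Field k] {P : Set ℤ}
    (hP : ∀ n : ℕ, {m | deg m + n ∈ P}.Finite) :
    FiniteDimensional k (LinearMap.range (weightProj (R := k) (ι := ι) deg P)) := by
  let E (s : Finset ι) : Submodule k k[M] := supported k k {m | deg m + (s.card : ℤ) ∈ P}
  have hE : ∀ s, FiniteDimensional k (E s) := fun s => by
    rw [show E s = _ from supported_eq_span_single k _]
    exact FiniteDimensional.span_of_finite k ((hP _).image _)
  have hle : LinearMap.range (weightProj (R := k) (ι := ι) deg P) ≤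
      LinearMap.range (LinearMap.pi fun s => (E s).subtype ∘ₗ LinearMap.proj s) := by
    rintro _ ⟨x, rfl⟩
    exact ⟨fun s => ⟨weightProj deg P x s, mem_supported'.2 fun m hm =>
      (coeff_weightProj_apply deg P x s m).trans (if_neg hm)⟩, rfl⟩
  exact Submodule.finiteDimensional_of_le hle

theorem eventually_weightProj_eq_zero [Finite ι] (x : Finset ι → R[M]) :
    ∀ᶠ v in Filter.atTop, ∀ P ⊆ Set.Ici v, weightProj deg P x = 0 := by
  obtain ⟨v, hv⟩ : BddAbove
      (⋃ s : Finset ι, (fun m => deg m + (s.card : ℤ)) '' (x s).coeff.support) :=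
    (Set.finite_iUnion fun s => (Finset.finite_toSet _).image _).bddAbove
  filter_upwards [Filter.eventually_gt_atTop v] with v' hv' P hP
  funext s
  ext m
  rw [coeff_weightProj_apply]
  split_ifs with hm
  · by_contra hne
    have hle := hv (Set.mem_iUnion.2 ⟨s, m, Finsupp.mem_support_iff.2 hne, rfl⟩)
    exact (hv'.trans_le (hP hm)).not_ge hle
  · rfl

end Grading

section KoszulBasis

variable {R M ι : Type*} [CommRing R] [Fintype ι]

variable (R M ι) in
/-- The basis of the elements `[m] e_s` of the Koszul complex. -/
def koszulBasis : Module.Basis (Σ _ : Finset ι, M) R (Finset ι → R[M]) :=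
  Pi.basis fun _ => AddMonoidAlgebra.basis M R

theorem koszulBasis_repr_apply (x : Finset ι → R[M]) (i : Σ _ : Finset ι, M) :
    (koszulBasis R M ι).repr x i = (x i.1).coeff i.2 := by
  rw [koszulBasis, Pi.basis_repr]
  rfl

variable [DecidableEq ι]

theorem koszulBasis_apply (i : Σ _ : Finset ι, M) :
    koszulBasis R M ι i = Pi.single i.1 (single i.2 1) := by
  rw [koszulBasis, Pi.basis_apply, AddMonoidAlgebra.basis_apply]

variable {α : Type*} [AddCommMonoid M] [LinearOrder α]

theorem koszulDiff_koszulBasis_mem_span (enc : ι → α) (z : ι → R[M]) (i : Σ _ : Finset ι, M) :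
    koszulDiff enc z (koszulBasis R M ι i) ∈
      Submodule.span R (koszulBasis R M ι '' {j | j.1.card < i.1.card}) := by
  rw [Module.Basis.mem_span_image]
  intro j hj
  rw [Finset.mem_coe, Finsupp.mem_support_iff, koszulBasis_repr_apply, koszulDiff_apply,
    Finset.sum_apply] at hj
  contrapose! hj
  rw [Set.mem_ofPred_eq, not_lt] at hj
  rw [Finset.sum_eq_zero, coeff_zero, Finsupp.zero_apply]
  intro e _
  rw [Pi.smul_apply]
  by_cases he : e ∈ j.1
  · rw [contraction_apply_of_mem enc he, smul_zero]
  · have hne : insert e j.1 ≠ i.1 := fun h => by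
      rw [← h, Finset.card_insert_of_notMem he] at hj
      lia
    rw [contraction_apply_of_notMem enc he, koszulBasis_apply, Pi.single_eq_of_ne hne, mul_zero,
      smul_zero]

end KoszulBasis

section KoszulMap

variable {R M ι k : Type*} [CommRing R] [AddCommMonoid M] [CommRing k]

/-- Base change of the Koszul complex along `ρ`. -/
def koszulMap (ρ : R →+* k) : (Finset ι → R[M]) →ₛₗ[ρ] (Finset ι → k[M]) where
  toFun x s := mapRingHom M ρ (x s)
  map_add' x y := funext fun s => map_add _ (x s) (y s)
  map_smul' c x := by
    funext s
    ext m
    simp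

theorem koszulMap_apply (ρ : R →+* k) (x : Finset ι → R[M]) (s : Finset ι) :
    koszulMap ρ x s = mapRingHom M ρ (x s) :=
  rfl

theorem koszulMap_surjective {ρ : R →+* k} (hρ : Function.Surjective ρ) :
    Function.Surjective (koszulMap (M := M) (ι := ι) ρ) := fun y => by
  choose x hx using fun s => AddMonoidAlgebra.map_surjective (ρ : R →+ k) hρ (y s)
  exact ⟨x, funext hx⟩

theorem koszulMap_weightProj (deg : M →+ ℤ) (ρ : R →+* k) (P : Set ℤ) (x : Finset ι → R[M]) :
    koszulMap ρ (weightProj deg P x) = weightProj deg P (koszulMap ρ x) :=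
  funext fun s => (degProj_mapRingHom deg ρ _ (x s)).symm

theorem koszulMap_linearMap_eq_zero [Finite ι] (ρ : R →+* k) (H : Module.End R (Finset ι → R[M]))
    {x : Finset ι → R[M]} (hx : koszulMap ρ x = 0) : koszulMap ρ (H x) = 0 := by
  cases nonempty_fintype ι
  have hcoeff : ∀ i, ρ ((koszulBasis R M ι).repr x i) = 0 := fun i => by
    rw [koszulBasis_repr_apply, ← coeff_mapRingHom, ← koszulMap_apply, hx]
    rfl
  rw [← (koszulBasis R M ι).linearCombination_repr x, Finsupp.linearCombination_apply, Finsupp.sum,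
    map_sum, map_sum]
  refine Finset.sum_eq_zero fun i _ => ?_
  rw [map_smul, LinearMap.map_smulₛₗ, hcoeff, zero_smul]

variable [DecidableEq ι] [Fintype ι] {α : Type*} [LinearOrder α]

theorem koszulMap_koszulDiff (ρ : R →+* k) (enc : ι → α) (z : ι → R[M]) (x : Finset ι → R[M]) :
    koszulMap ρ (koszulDiff enc z x) =
      koszulDiff enc (fun e => mapRingHom M ρ (z e)) (koszulMap ρ x) := by
  funext s
  simp only [koszulMap_apply, koszulDiff_apply, Finset.sum_apply, map_sum, Pi.smul_apply,
    smul_eq_mul, map_mul]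
  refine Finset.sum_congr rfl fun e _ => congrArg _ ?_
  by_cases he : e ∈ s
  · rw [contraction_apply_of_mem enc he, contraction_apply_of_mem enc he, map_zero]
  · rw [contraction_apply_of_notMem enc he, contraction_apply_of_notMem enc he, map_mul]
    simp only [koszulSign, map_pow, map_neg, map_one, koszulMap_apply]

end KoszulMap

section GradedKoszul

variable {R M ι α : Type*} [CommRing R] [AddCommMonoid M] (deg : M →+ ℤ) [DecidableEq ι]
  [LinearOrder α] {enc : ι → α} {z : ι → R[M]}

theorem contraction_degree_one_smul {a : R[M]} (ha : a ∈ gradeBy R deg 1) (e : ι) (P : Set ℤ)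
    (x : Finset ι → R[M]) :
    a • contraction enc e (weightProj deg P x) = weightProj deg P (a • contraction enc e x) := by
  funext s
  rw [weightProj_apply, Pi.smul_apply, Pi.smul_apply, smul_eq_mul, smul_eq_mul, degProj_mul deg ha]
  by_cases he : e ∈ s
  · rw [contraction_apply_of_mem enc he, contraction_apply_of_mem enc he, map_zero]
  · have hcard : ((insert e s).card : ℤ) = 1 + s.card := by
      rw [Finset.card_insert_of_notMem he]
      push_cast
      ring
    rw [contraction_apply_of_notMem enc he, contraction_apply_of_notMem enc he, weightProj_apply,
      hcard, Set.preimage_preimage]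
    simp only [add_assoc]
    rcases neg_one_pow_eq_or R[M] (s.filter fun e' => enc e' < enc e).card with h | h
    · simp only [koszulSign, h, one_mul]
    · simp only [koszulSign, h, neg_one_mul, map_neg]

variable [Fintype ι]

theorem koszulDiff_weightProj (hz : ∀ e, z e ∈ gradeBy R deg 1) (P : Set ℤ)
    (x : Finset ι → R[M]) :
    koszulDiff enc z (weightProj deg P x) = weightProj deg P (koszulDiff enc z x) := by
  simp only [koszulDiff_apply, map_sum, contraction_degree_one_smul deg (hz _)]

/-- The part of the Koszul complex of `z` with weights in `P` is exact. -/
def ExactInWeights (enc : ι → α) (z : ι → R[M]) (P : Set ℤ) : Prop :=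
  ∀ x, koszulDiff enc z x = 0 → weightProj deg P x ∈ LinearMap.range (koszulDiff enc z)

/-- Over a Noetherian ring the cycles are finitely generated, and a monomial multiple of a
generator of large weight is killed by `J`, or vanishes after the projection. -/
theorem exists_exactInWeights_Ici [IsNoetherianRing R[M]] (henc : Function.Injective enc)
    (hz : ∀ e, z e ∈ gradeBy R deg 1) {k₀ : ℤ}
    (hk₀ : ∀ m, k₀ ≤ deg m → single m (1 : R) ∈ Ideal.span (Set.range z)) :
    ∃ w, ExactInWeights deg enc z (Set.Ici w) := by
  obtain ⟨G, hG⟩ := IsNoetherian.noetherian (LinearMap.ker (koszulDiff enc z))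
  obtain ⟨v, hv⟩ := ((Filter.eventually_all_finset G).2 fun y _ =>
    eventually_weightProj_eq_zero deg y).exists
  have hterm : ∀ y ∈ G, ∀ (m : M) (c : R), weightProj deg (Set.Ici (v + k₀)) (single m c • y) ∈
      LinearMap.range (koszulDiff enc z) := by
    intro y hy m c
    have hycycle : koszulDiff enc z y = 0 := LinearMap.mem_ker.1 (hG ▸ Submodule.subset_span hy)
    rw [weightProj_single_smul]
    rcases le_or_gt k₀ (deg m) with hm | hm
    · have hmem : single m c ∈ Ideal.span (Set.range z) := by
        have hmul := Ideal.mul_mem_left _ (single 0 c) (hk₀ m hm)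
        rwa [single_mul_single, zero_add, mul_one] at hmul
      refine smul_mem_range_koszulDiff henc hmem ?_
      rw [koszulDiff_weightProj deg hz, hycycle, map_zero]
    · rw [hv y hy _ fun k hk => ?_, smul_zero]
      · exact Submodule.zero_mem _
      · have hk' : v + k₀ ≤ k + deg m := hk
        exact Set.mem_Ici.2 (by lia)
  refine ⟨v + k₀, fun x hx => ?_⟩
  obtain ⟨c, rfl⟩ := Submodule.mem_span_finset'.1 (hG ▸ LinearMap.mem_ker.2 hx)
  rw [map_sum]
  refine sum_mem fun y _ => ?_
  have hsum : ∑ m ∈ (c y).coeff.support, single m ((c y).coeff m) = c y := sum_coeff_single _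
  rw [← hsum, Finset.sum_smul, map_sum]
  exact sum_mem fun m _ => hterm y y.2 m _

theorem ExactInWeights.exists_nullHomotopy {P : Set ℤ} (h : ExactInWeights deg enc z P)
    (henc : Function.Injective enc) (hz : ∀ e, z e ∈ gradeBy R deg 1) :
    ∃ H : Module.End R (Finset ι → R[M]),
      ∀ x, koszulDiff enc z (H x) + H (koszulDiff enc z x) = weightProj deg P x :=
  exists_nullHomotopy_of_idempotent (koszulBasis R M ι)
    (fun i => Nat.lt_succ_of_le (Finset.card_le_univ i.1))
    (d := (koszulDiff enc z).restrictScalars R) (koszulDiff_koszulDiff henc z)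
    (weightProj_weightProj deg P) (koszulDiff_weightProj deg hz P)
    (koszulDiff_koszulBasis_mem_span enc z) h

/-- Exactness need not be inherited by quotients of the base ring; a null-homotopy is. -/
theorem ExactInWeights.map {P : Set ℤ} (h : ExactInWeights deg enc z P)
    (henc : Function.Injective enc) (hz : ∀ e, z e ∈ gradeBy R deg 1) {k : Type*} [CommRing k]
    {ρ : R →+* k} (hρ : Function.Surjective ρ) :
    ExactInWeights deg enc (fun e => mapRingHom M ρ (z e)) P := fun y hy => by
  obtain ⟨H, hH⟩ := h.exists_nullHomotopy deg henc hz
  obtain ⟨x, rfl⟩ := koszulMap_surjective hρ y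
  rw [← koszulMap_koszulDiff] at hy
  refine ⟨koszulMap ρ (H x), ?_⟩
  rw [← koszulMap_koszulDiff, ← koszulMap_weightProj, ← hH, map_add,
    koszulMap_linearMap_eq_zero ρ H hy, add_zero]

end GradedKoszul

section FiniteQuotient

theorem single_one_mem_of_isUnit {R M : Type*} [CommRing R] [AddCommMonoid M] {I : Ideal R[M]}
    {m : M} {u : R} (hu : IsUnit u) (hm : single m u ∈ I) : single m 1 ∈ I := by
  obtain ⟨v, hv⟩ := hu.exists_left_inv
  have hmul := I.mul_mem_left (single 0 v) hm
  rwa [single_mul_single, zero_add, hv] at hmul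

variable {k M : Type*} [Field k] [AddCommMonoid M]

theorem finite_of_forall_supported_eq_zero {J : Ideal k[M]} [FiniteDimensional k (k[M] ⧸ J)]
    {T : Set M} (hT : ∀ x ∈ J, x ∈ supported k k T → x = 0) : T.Finite := by
  have hli : LinearIndependent k fun m : T => Ideal.Quotient.mkₐ k J (single (m : M) (1 : k)) := by
    refine LinearIndependent.map (f := (Ideal.Quotient.mkₐ k J).toLinearMap)
      (v := fun m : T => single (m : M) (1 : k)) ?_ ?_
    · simpa only [Function.comp_def, AddMonoidAlgebra.basis_apply] using
        (AddMonoidAlgebra.basis M k).linearIndependent.comp ((↑) : T → M) Subtype.val_injective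
    · rw [← Set.image_eq_range (fun m => single m (1 : k)), ← supported_eq_span_single,
        Submodule.disjoint_def]
      exact fun x hx hxJ => hT x (Ideal.Quotient.eq_zero_iff_mem.1 hxJ) hx
  have := hli.finite
  exact T.toFinite

theorem finite_compl_univ_add {J : Ideal k[M]} [FiniteDimensional k (k[M] ⧸ J)] {D : Set M}
    (hJ : J ≤ Ideal.span (of' k M '' D)) : ((Set.univ : Set M) + D)ᶜ.Finite := by
  refine finite_of_forall_supported_eq_zero (J := J) fun x hx hxD => ?_
  ext m
  by_contra hm
  obtain ⟨d, hd, m', rfl⟩ := mem_ideal_span_of'_image.1 (hJ hx) m (Finsupp.mem_support_iff.2 hm)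
  exact hm (mem_supported'.1 hxD _ (Set.notMem_compl_iff.2 (Set.add_mem_add (Set.mem_univ m') hd)))

theorem exists_forall_single_mem_span (deg : M →+ ℤ) {s : Set k[M]}
    (hs : ∀ a ∈ s, ∃ δ, a ∈ gradeBy k deg δ) [FiniteDimensional k (k[M] ⧸ Ideal.span s)] :
    ∃ k₀, ∀ m, k₀ ≤ deg m → single m (1 : k) ∈ Ideal.span s := by
  let K : Set ℤ := deg '' {m | single m (1 : k) ∉ Ideal.span s}
  choose μ hμ hdeg using fun κ : K => κ.2
  have hfin : (Set.range μ).Finite := by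
    refine finite_of_forall_supported_eq_zero (J := Ideal.span s) fun x hx hxμ => ?_
    ext m
    by_contra hm
    obtain ⟨κ, rfl⟩ : m ∈ Set.range μ := by
      by_contra hmμ
      exact hm (mem_supported'.1 hxμ m hmμ)
    have hproj : degProj deg {(κ : ℤ)} x = single (μ κ) (x.coeff (μ κ)) := by
      ext m
      rw [coeff_degProj]
      rcases eq_or_ne (μ κ) m with rfl | hne
      · rw [if_pos (Set.mem_singleton_of_eq (hdeg κ)), coeff_single, Finsupp.single_eq_same]
      · rw [coeff_single, Finsupp.single_eq_of_ne' hne]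
        split_ifs with hmκ
        · refine mem_supported'.1 hxμ m ?_
          rintro ⟨κ', rfl⟩
          exact hne (congrArg μ (Subtype.ext (hmκ.symm.trans (hdeg κ'))))
        · rfl
    exact hμ κ (single_one_mem_of_isUnit (isUnit_iff_ne_zero.2 hm)
      (hproj ▸ degProj_mem_span deg hs hx _))
  have hK : K ⊆ deg '' Set.range μ := fun κ hκ => ⟨μ ⟨κ, hκ⟩, ⟨_, rfl⟩, hdeg ⟨κ, hκ⟩⟩
  obtain ⟨v, hv⟩ := ((hfin.image deg).subset hK).bddAbove
  refine ⟨v + 1, fun m hm => ?_⟩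
  by_contra hne
  exact absurd (hv ⟨m, hne, rfl⟩) (by lia)

theorem finiteDimensional_quotient_of_finite {J : Ideal k[M]}
    (hfin : {m | single m (1 : k) ∉ J}.Finite) : FiniteDimensional k (k[M] ⧸ J) := by
  let π : k[M] →ₗ[k] k[M] ⧸ J := (Ideal.Quotient.mkₐ k J).toLinearMap
  let E := Submodule.span k ((fun m => π (single m 1)) '' {m | single m (1 : k) ∉ J})
  have hE : ∀ x, π x ∈ E := fun x => by
    induction x using AddMonoidAlgebra.induction_linear with
    | zero => exact map_zero π ▸ E.zero_mem
    | add x y hx hy => exact map_add π x y ▸ E.add_mem hx hy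
    | single m c =>
      rw [← mul_one c, ← smul_eq_mul, ← smul_single, map_smul]
      refine E.smul_mem c ?_
      by_cases hm : single m (1 : k) ∈ J
      · exact (Ideal.Quotient.eq_zero_iff_mem.2 hm : π (single m 1) = 0) ▸ E.zero_mem
      · exact Submodule.subset_span ⟨m, hm, rfl⟩
  have htop : E = ⊤ := eq_top_iff.2 fun y _ => by
    obtain ⟨x, rfl⟩ := Ideal.Quotient.mkₐ_surjective k J y
    exact hE x
  exact ⟨Submodule.fg_def.2 ⟨_, hfin.image _, htop⟩⟩

end FiniteQuotient

section FiniteSublevels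

variable {M : Type*} [AddCommMonoid M] {deg : M →+ ℤ} {D : Set M}

theorem finite_setOf_deg_lt (hdeg : ∀ m, 0 ≤ deg m) (hD : ∀ d ∈ D, deg d = 1) (hDfin : D.Finite)
    (hcompl : ((Set.univ : Set M) + D)ᶜ.Finite) (j : ℤ) : {m | deg m < j}.Finite := by
  suffices h : ∀ n : ℕ, {m | deg m < n}.Finite from
    (h j.toNat).subset fun m hm => lt_of_lt_of_le hm (Int.self_le_toNat j)
  intro n
  induction n with
  | zero => exact Set.finite_empty.subset fun m hm => (hdeg m).not_gt hm
  | succ n ih =>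
    refine (hcompl.union (ih.add hDfin)).subset fun m hm => ?_
    refine or_iff_not_imp_left.2 fun hmD => ?_
    obtain ⟨m', -, d, hd, rfl⟩ := Set.notMem_compl_iff.1 hmD
    refine Set.add_mem_add ?_ hd
    rw [Set.mem_ofPred_eq, map_add, hD d hd] at hm
    exact Set.mem_ofPred_eq ▸ by push_cast at hm; lia

theorem addMonoid_fg_of_finite_compl (hdeg : ∀ m, 0 ≤ deg m) (hD : ∀ d ∈ D, deg d = 1)
    (hDfin : D.Finite) (hcompl : ((Set.univ : Set M) + D)ᶜ.Finite) : AddMonoid.FG M := by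
  refine ⟨(AddSubmonoid.fg_iff _).2 ⟨D ∪ (Set.univ + D)ᶜ, ?_, hDfin.union hcompl⟩⟩
  have hmem : ∀ n : ℕ, ∀ m, deg m < n → m ∈ AddSubmonoid.closure (D ∪ (Set.univ + D)ᶜ) := by
    intro n
    induction n with
    | zero => exact fun m hm => absurd hm (hdeg m).not_gt
    | succ n ih =>
      intro m hm
      by_cases hmD : m ∈ (Set.univ : Set M) + D
      · obtain ⟨m', -, d, hd, rfl⟩ := hmD
        rw [map_add, hD d hd] at hm
        push_cast at hm
        exact add_mem (ih m' (by lia)) (AddSubmonoid.subset_closure (Or.inl hd))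
      · exact AddSubmonoid.subset_closure (Or.inr hmD)
  exact eq_top_iff.2 fun m _ => hmem ((deg m).toNat + 1) m (by push_cast; lia)

theorem exists_forall_mem_univ_add (hcompl : ((Set.univ : Set M) + D)ᶜ.Finite) :
    ∃ j, ∀ m, j ≤ deg m → m ∈ (Set.univ : Set M) + D := by
  obtain ⟨v, hv⟩ := (hcompl.image deg).bddAbove
  refine ⟨v + 1, fun m hm => ?_⟩
  by_contra hmD
  exact absurd (hv ⟨m, hmD, rfl⟩) (by lia)

theorem single_mem_of_le_deg {R : Type*} [CommRing R] {I : Ideal R[M]} {j : ℤ} {c : R}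
    (hD : ∀ d ∈ D, deg d = 1) (hj : ∀ m, j < deg m → m ∈ (Set.univ : Set M) + D)
    (hI : ∀ m, deg m = j → single m c ∈ I) (m : M) (hm : j ≤ deg m) : single m c ∈ I := by
  obtain ⟨n, hn⟩ := Int.le.dest hm
  induction n generalizing m with
  | zero => exact hI m (by lia)
  | succ n ih =>
    obtain ⟨m', -, d, hd, rfl⟩ := hj m (by lia)
    rw [map_add, hD d hd] at hn
    have hmul := I.mul_mem_left (single d 1) (ih m' (by lia) (by lia))
    rwa [single_mul_single, one_mul, add_comm] at hmul

end FiniteSublevels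

section Lifting

variable {R k M : Type*} [CommRing R] [CommRing k] [AddCommMonoid M] {ρ : R →+* k}

theorem mem_ker_smul_supported {T : Set M} {x : R[M]} (hx : x ∈ supported R R T)
    (hρx : mapRingHom M ρ x = 0) : x ∈ RingHom.ker ρ • supported R R T := by
  have hsum : ∑ m ∈ x.coeff.support, single m (x.coeff m) = x := sum_coeff_single x
  rw [← hsum]
  refine sum_mem fun m hm => ?_
  rw [← mul_one (x.coeff m), ← smul_eq_mul, ← smul_single]
  refine Submodule.smul_mem_smul ?_ ?_
  · rw [RingHom.mem_ker, ← coeff_mapRingHom, hρx]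
    rfl
  · rw [supported_eq_span_single]
    exact Submodule.subset_span ⟨m, hx hm, rfl⟩

/-- Nakayama's lemma, applied to the homogeneous component of degree `j` of the quotient. -/
theorem exists_single_mem_of_mem_map [Nontrivial k] (deg : M →+ ℤ) (hρ : Function.Surjective ρ)
    {s : Set R[M]} (hs : ∀ a ∈ s, ∃ δ, a ∈ gradeBy R deg δ) {j : ℤ} (hfin : {m | deg m = j}.Finite)
    (hj : ∀ m, deg m = j → single m 1 ∈ (Ideal.span s).map (mapRingHom M ρ)) :
    ∃ h : R, ρ h = 1 ∧ ∀ m, deg m = j → single m h ∈ Ideal.span s := by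
  let N := supported R R {m | deg m = j}
  have hN : N = Submodule.span R ((fun m => single m 1) '' {m | deg m = j}) :=
    supported_eq_span_single R _
  have hsupp : ∀ m, deg m = j → single m 1 ∈ N := fun m hm => by
    rw [hN]
    exact Submodule.subset_span ⟨m, hm, rfl⟩
  have hle : N ≤ (Ideal.span s).restrictScalars R ⊔ RingHom.ker ρ • N := by
    rw [hN, Submodule.span_le, ← hN]
    rintro _ ⟨m, hm, rfl⟩
    obtain ⟨y, hy, hym⟩ := (Ideal.mem_map_iff_of_surjective _
      (AddMonoidAlgebra.map_surjective (ρ : R →+ k) hρ)).1 (hj m hm)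
    have hsingle : single m (1 : R) - degProj deg {j} y ∈ RingHom.ker ρ • N := by
      refine mem_ker_smul_supported (sub_mem ?_ ?_) ?_
      · exact hsupp m hm
      · exact mem_supported'.2 fun m' hm' => (coeff_degProj deg _ y m').trans (if_neg hm')
      · rw [map_sub, ← degProj_mapRingHom, hym, degProj_single, if_pos (Set.mem_singleton_of_eq hm),
          mapRingHom_single, map_one, sub_self]
    have hsum := Submodule.add_mem_sup (S := (Ideal.span s).restrictScalars R)
      (degProj_mem_span deg hs hy {j}) hsingle
    rwa [add_sub_cancel] at hsum
  obtain ⟨h, hker, hsmul⟩ := Submodule.exists_sub_one_mem_and_smul_le_of_fg_of_le_sup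
    (hN ▸ Submodule.fg_span (hfin.image _)) le_rfl hle
  refine ⟨h, ?_, fun m hm => ?_⟩
  · rwa [RingHom.mem_ker, map_sub, map_one, sub_eq_zero] at hker
  · have hmem := hsmul (Submodule.smul_mem_pointwise_smul _ h N (hsupp m hm))
    rwa [smul_single, smul_eq_mul, mul_one] at hmem

end Lifting

section JacobianIdeal

variable {R k M Δ ν : Type*} [CommRing R] [CommRing k] [AddCommMonoid M] [Fintype Δ] (incl : Δ → M)

/-- The element `∑ φ(m) a(m) [m]` of the semigroup ring. Here `φ` is a coefficient function and `a`
is an integral weight function: pairing with `n` for `z_n`, and the part of it of degree `j`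
for the grading `·n₀` for the graded pieces `z_{i,j}`. -/
def weightedSum (φ : Δ → R) (a : Δ → ℤ) : R[M] :=
  ∑ m, single (incl m) (φ m * a m)

theorem weightedSum_mem_gradeBy {deg : M →+ ℤ} (hincl : ∀ m, deg (incl m) = 1) (φ : Δ → R)
    (a : Δ → ℤ) : weightedSum incl φ a ∈ gradeBy R deg 1 :=
  sum_mem fun m _ => hincl m ▸ single_mem_gradeBy deg (incl m) _

theorem exists_mem_gradeBy_of_mem_range_weightedSum {deg : M →+ ℤ}
    (hincl : ∀ m, deg (incl m) = 1) (φ : Δ → R) {a : ν → Δ → ℤ} :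
    ∀ z ∈ Set.range fun n => weightedSum incl φ (a n), ∃ δ, z ∈ gradeBy R deg δ :=
  Set.forall_mem_range.2 fun n => ⟨1, weightedSum_mem_gradeBy incl hincl φ (a n)⟩

theorem mapRingHom_weightedSum (ρ : R →+* k) (φ : Δ → R) (a : Δ → ℤ) :
    mapRingHom M ρ (weightedSum incl φ a) = weightedSum incl (ρ ∘ φ) a := by
  simp only [weightedSum, map_sum, mapRingHom_single, map_mul, map_intCast, Function.comp_apply]

theorem weightedSum_add_left (φ ψ : Δ → R) (a : Δ → ℤ) :
    weightedSum incl (φ + ψ) a = weightedSum incl φ a + weightedSum incl ψ a := by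
  simp only [weightedSum, Pi.add_apply, add_mul, single_add, Finset.sum_add_distrib]

theorem weightedSum_smul_left (c : R) (φ : Δ → R) (a : Δ → ℤ) :
    weightedSum incl (c • φ) a = c • weightedSum incl φ a := by
  simp only [weightedSum, Pi.smul_apply, smul_mul_assoc, smul_single, Finset.smul_sum]

/-- The weighted sum as an additive function of the weights. -/
def weightedSumHom (φ : Δ → R) : (Δ → ℤ) →+ R[M] where
  toFun := weightedSum incl φ
  map_zero' := by
    simp only [weightedSum, Pi.zero_apply, Int.cast_zero, mul_zero, single_zero,
      Finset.sum_const_zero]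
  map_add' a b := by
    simp only [weightedSum, Pi.add_apply, Int.cast_add, mul_add, single_add,
      Finset.sum_add_distrib]

/-- The ideal generated by the weighted sums of a family of weight functions; for the functions
`m ↦ m · n` this is the Jacobian ideal, whose quotient decides non-degeneracy. -/
def jacobianIdeal (φ : Δ → R) (a : ν → Δ → ℤ) : Ideal R[M] :=
  Ideal.span (Set.range fun n => weightedSum incl φ (a n))

theorem map_jacobianIdeal (ρ : R →+* k) (φ : Δ → R) (a : ν → Δ → ℤ) :
    (jacobianIdeal incl φ a).map (mapRingHom M ρ) = jacobianIdeal incl (ρ ∘ φ) a := by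
  rw [jacobianIdeal, Ideal.map_span, ← Set.range_comp]
  simp only [Function.comp_def, mapRingHom_weightedSum]
  rfl

theorem jacobianIdeal_le_span_of' (φ : Δ → R) (a : ν → Δ → ℤ) :
    jacobianIdeal incl φ a ≤ Ideal.span (of' R M '' Set.range incl) := by
  refine Ideal.span_le.2 ?_
  rintro _ ⟨n, rfl⟩
  refine sum_mem fun m _ => ?_
  rw [← mul_one (φ m * _), ← zero_add (incl m), ← single_mul_single]
  exact Ideal.mul_mem_left _ _ (Ideal.subset_span ⟨_, ⟨m, rfl⟩, rfl⟩)

theorem jacobianIdeal_mono (φ : Δ → R) {ι : Type*} {a : ν → Δ → ℤ} {b : ι → Δ → ℤ}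
    (hab : ∀ n, a n ∈ AddSubgroup.closure (Set.range b)) :
    jacobianIdeal incl φ a ≤ jacobianIdeal incl φ b := by
  have hle : AddSubgroup.closure (Set.range b) ≤
      (jacobianIdeal incl φ b).toAddSubgroup.comap (weightedSumHom incl φ) := by
    rw [AddSubgroup.closure_le]
    rintro _ ⟨e, rfl⟩
    exact Ideal.subset_span ⟨e, rfl⟩
  refine Ideal.span_le.2 ?_
  rintro _ ⟨n, rfl⟩
  exact hle (hab n)

end JacobianIdeal

section CoefficientFamily

variable {k M Δ ν : Type*} [Field k]

theorem eval_comp_X (f : Δ → k) : MvPolynomial.eval f ∘ MvPolynomial.X = f :=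
  funext fun m => MvPolynomial.eval_X m

variable [AddCommMonoid M] [Fintype Δ] {incl : Δ → M} {deg : M →+ ℤ}

variable (hdeg : ∀ m, 0 ≤ deg m) (hincl : ∀ m, deg (incl m) = 1) {a : ν → Δ → ℤ} {f₀ : Δ → k}
  [hf₀ : FiniteDimensional k (k[M] ⧸ jacobianIdeal incl f₀ a)]

include hdeg hincl hf₀

theorem finite_setOf_deg_lt_of_finiteDimensional (j : ℤ) : {m | deg m < j}.Finite :=
  finite_setOf_deg_lt hdeg (Set.forall_mem_range.2 hincl) (Set.finite_range incl)
    (finite_compl_univ_add (jacobianIdeal_le_span_of' incl f₀ a)) j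

theorem addMonoid_fg_of_finiteDimensional : AddMonoid.FG M :=
  addMonoid_fg_of_finite_compl hdeg (Set.forall_mem_range.2 hincl) (Set.finite_range incl)
    (finite_compl_univ_add (jacobianIdeal_le_span_of' incl f₀ a))

theorem exists_single_mem_jacobianIdeal_X :
    ∃ (j : ℤ) (h : MvPolynomial Δ k), MvPolynomial.eval f₀ h ≠ 0 ∧
      ∀ m, j ≤ deg m → single m h ∈ jacobianIdeal incl MvPolynomial.X a := by
  obtain ⟨j₁, hj₁⟩ := exists_forall_mem_univ_add (deg := deg)
    (finite_compl_univ_add (jacobianIdeal_le_span_of' incl f₀ a))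
  obtain ⟨j₂, hj₂⟩ : ∃ j₂, ∀ m, j₂ ≤ deg m → single m 1 ∈ jacobianIdeal incl f₀ a :=
    have : FiniteDimensional k (k[M] ⧸ Ideal.span (Set.range fun n => weightedSum incl f₀ (a n))) :=
      hf₀
    exists_forall_single_mem_span deg (exists_mem_gradeBy_of_mem_range_weightedSum incl hincl f₀)
  have hfin : {m | deg m = max j₁ j₂}.Finite :=
    (finite_setOf_deg_lt_of_finiteDimensional hdeg hincl (f₀ := f₀) (a := a)
      (max j₁ j₂ + 1)).subset fun m hm => Int.lt_add_one_of_le (le_of_eq hm)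
  obtain ⟨h, hh₀, hh⟩ := exists_single_mem_of_mem_map (ρ := MvPolynomial.eval f₀) deg
    (fun c => ⟨MvPolynomial.C c, MvPolynomial.eval_C c⟩)
    (exists_mem_gradeBy_of_mem_range_weightedSum incl hincl MvPolynomial.X) hfin fun m hm => by
      change single m 1 ∈ (jacobianIdeal incl MvPolynomial.X a).map _
      rw [map_jacobianIdeal, eval_comp_X]
      exact hj₂ m (hm ▸ le_max_right _ _)
  refine ⟨max j₁ j₂, h, hh₀ ▸ one_ne_zero, single_mem_of_le_deg (Set.forall_mem_range.2 hincl)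
    (fun m hm => hj₁ m ((le_max_left _ _).trans hm.le)) hh⟩

theorem eventually_finiteDimensional_quotient_jacobianIdeal :
    ∀ᶠ f in zariskiNhds f₀, FiniteDimensional k (k[M] ⧸ jacobianIdeal incl f a) := by
  obtain ⟨j, h, hh₀, hh⟩ := exists_single_mem_jacobianIdeal_X hdeg hincl (f₀ := f₀) (a := a)
  refine eventually_zariskiNhds.2 ⟨h, hh₀, fun f hf => ?_⟩
  refine finiteDimensional_quotient_of_finite
    ((finite_setOf_deg_lt_of_finiteDimensional hdeg hincl (f₀ := f₀) (a := a) j).subset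
      fun m => ?_)
  contrapose!
  intro hm
  have hmap := Ideal.mem_map_of_mem (mapRingHom M (MvPolynomial.eval f)) (hh m (not_lt.1 hm))
  rw [map_jacobianIdeal, eval_comp_X, mapRingHom_single] at hmap
  exact not_not.2 (single_one_mem_of_isUnit (isUnit_iff_ne_zero.2 hf) hmap)

/-- Over the localization at `h`, a Noetherian ring, the bound on the weights is uniform in all
the coefficient functions with `h(f) ≠ 0`. -/
theorem exists_eventually_exactInWeights_Ici {ι α : Type*} [Fintype ι] [DecidableEq ι]
    [LinearOrder α] {enc : ι → α} (henc : Function.Injective enc) {b : ι → Δ → ℤ}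
    (hab : ∀ n, a n ∈ AddSubgroup.closure (Set.range b)) :
    ∃ w, ∀ᶠ f in zariskiNhds f₀,
      ExactInWeights deg enc (fun e => weightedSum incl f (b e)) (Set.Ici w) := by
  obtain ⟨j, h, hh₀, hh⟩ := exists_single_mem_jacobianIdeal_X hdeg hincl (f₀ := f₀) (a := a)
  have := addMonoid_fg_of_finiteDimensional hdeg hincl (f₀ := f₀) (a := a)
  let R := Localization.Away h
  have : IsNoetherianRing R := IsLocalization.isNoetherianRing (Submonoid.powers h) R inferInstance
  have : IsNoetherianRing R[M] := Algebra.FiniteType.isNoetherianRing R _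
  let φ : Δ → R := algebraMap (MvPolynomial Δ k) R ∘ MvPolynomial.X
  have hz : ∀ e, weightedSum incl φ (b e) ∈ gradeBy R deg 1 := fun e =>
    weightedSum_mem_gradeBy incl hincl φ (b e)
  have hJ : ∀ m, j ≤ deg m → single m 1 ∈ jacobianIdeal incl φ b := fun m hm => by
    have hmap := Ideal.mem_map_of_mem (mapRingHom M (algebraMap (MvPolynomial Δ k) R)) (hh m hm)
    rw [map_jacobianIdeal, mapRingHom_single] at hmap
    exact jacobianIdeal_mono incl φ hab
      (single_one_mem_of_isUnit (IsLocalization.Away.algebraMap_isUnit h) hmap)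
  obtain ⟨w, hw⟩ := exists_exactInWeights_Ici deg henc hz hJ
  refine ⟨w, eventually_zariskiNhds.2 ⟨h, hh₀, fun f hf => ?_⟩⟩
  let ρ : R →+* k := IsLocalization.Away.lift h (g := MvPolynomial.eval f) (isUnit_iff_ne_zero.2 hf)
  have hρ : ∀ p, ρ (algebraMap (MvPolynomial Δ k) R p) = MvPolynomial.eval f p :=
    IsLocalization.Away.lift_eq h _
  have hρφ : ρ ∘ φ = f := funext fun m => (hρ _).trans (MvPolynomial.eval_X m)
  have hmap := hw.map deg henc hz (ρ := ρ) fun c =>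
    ⟨algebraMap _ R (MvPolynomial.C c), (hρ _).trans (MvPolynomial.eval_C c)⟩
  simpa only [mapRingHom_weightedSum, hρφ] using hmap

end CoefficientFamily

section Semicontinuity

variable {M Δ ν : Type*} [AddCommMonoid M] [Fintype Δ] {incl : Δ → M} {deg : M →+ ℤ}

theorem isLinearMap_koszulD_weightedSum {ι : Type*} [Fintype ι] [DecidableEq ι]
    (incl : Δ → M) (b : ι → Δ → ℤ) (enc : ι → ℤ) :
    IsLinearMap ℂ fun f : Δ → ℂ => koszulD (fun e => weightedSum incl f (b e)) enc where
  map_add f g := by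
    refine LinearMap.ext fun x => ?_
    simp only [koszulD_eq_koszulDiff, LinearMap.add_apply, LinearMap.restrictScalars_apply,
      koszulDiff_apply, weightedSum_add_left, add_smul, Finset.sum_add_distrib]
  map_smul c f := by
    refine LinearMap.ext fun x => ?_
    simp only [koszulD_eq_koszulDiff, LinearMap.smul_apply, LinearMap.restrictScalars_apply,
      koszulDiff_apply, weightedSum_smul_left, smul_assoc, Finset.smul_sum]

theorem eventually_finrank_opCohomology_koszulD_le (hdeg : ∀ m, 0 ≤ deg m)
    (hincl : ∀ m, deg (incl m) = 1) {a : ν → Δ → ℤ} {f₀ : Δ → ℂ}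
    [FiniteDimensional ℂ (ℂ[M] ⧸ jacobianIdeal incl f₀ a)] {ι : Type*} [Fintype ι] [DecidableEq ι]
    {enc : ι → ℤ} (henc : Function.Injective enc) {b : ι → Δ → ℤ}
    (hab : ∀ n, a n ∈ AddSubgroup.closure (Set.range b)) :
    ∀ᶠ f in zariskiNhds f₀,
      FiniteDimensional ℂ (opCohomology (koszulD (fun e => weightedSum incl f (b e)) enc)) ∧
      Module.finrank ℂ (opCohomology (koszulD (fun e => weightedSum incl f (b e)) enc)) ≤
        Module.finrank ℂ (opCohomology (koszulD (fun e => weightedSum incl f₀ (b e)) enc)) := by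
  obtain ⟨w, hw⟩ := exists_eventually_exactInWeights_Ici hdeg hincl (f₀ := f₀) henc hab
  have hfin : FiniteDimensional ℂ
      (LinearMap.range (weightProj (R := ℂ) (ι := ι) deg (Set.Iio w))) :=
    finiteDimensional_range_weightProj deg fun n =>
      (finite_setOf_deg_lt_of_finiteDimensional hdeg hincl w (f₀ := f₀) (a := a)).subset
        fun m (hm : deg m + n < w) => by rw [Set.mem_ofPred_eq]; lia
  have hz : ∀ f : Δ → ℂ, ∀ e, weightedSum incl f (b e) ∈ gradeBy ℂ deg 1 := fun f e =>
    weightedSum_mem_gradeBy incl hincl f (b e)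
  refine eventually_finrank_opCohomology_le
    ((isLinearMap_koszulD_weightedSum incl b enc).mk' _) (q := weightProj deg (Set.Iio w))
    (fun f x => ?_) (weightProj_weightProj deg _) (fun f x => ?_) ?_
  · simp only [IsLinearMap.mk'_apply, koszulD_eq_koszulDiff, LinearMap.restrictScalars_apply,
      koszulDiff_koszulDiff henc]
  · simp only [IsLinearMap.mk'_apply, koszulD_eq_koszulDiff, LinearMap.restrictScalars_apply,
      koszulDiff_weightProj deg (hz f)]
  · filter_upwards [hw] with f hf x hx
    rw [IsLinearMap.mk'_apply, koszulD_eq_koszulDiff] at hx ⊢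
    rw [sub_weightProj, Set.compl_Iio]
    exact hf x hx

end Semicontinuity

end SemigroupRing

section Order

theorem exists_orderIso_of_surjective {X α β : Type*} [PartialOrder α] [PartialOrder β] {p : X → α}
    {q : X → β} (hp : Function.Surjective p) (hq : Function.Surjective q)
    (h : ∀ x y, p x ≤ p y ↔ q x ≤ q y) : ∃ σ : α ≃o β, ∀ x, σ (p x) = q x := by
  choose s hs using hp
  have hσ : ∀ x, q (s (p x)) = q x := fun x =>
    le_antisymm ((h _ _).1 (hs _).le) ((h _ _).1 (hs _).ge)
  let σ : α ↪o β := OrderEmbedding.ofMapLEIff (fun a => q (s a)) fun a b => by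
    rw [← h, hs, hs]
  exact ⟨RelIso.ofSurjective σ fun b => (hq b).imp' p fun x hx => (hσ x).trans hx, hσ⟩

theorem mul_add_coe_lt_mul_add_coe {r : ℕ} {a b : ℤ} {i j : Fin r} :
    a * r + (i : ℤ) < b * r + (j : ℤ) ↔ a < b ∨ a = b ∧ i < j := by
  have hi := i.isLt
  have hj := j.isLt
  rw [Fin.lt_def]
  rcases lt_trichotomy a b with h | rfl | h
  · have hmul : (a + 1) * r ≤ b * r := mul_le_mul_of_nonneg_right h (Nat.cast_nonneg r)
    exact iff_of_true (by lia) (Or.inl h)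
  · lia
  · have hmul : (b + 1) * r ≤ a * r := mul_le_mul_of_nonneg_right h (Nat.cast_nonneg r)
    exact iff_of_false (by lia) (by lia)

end Order

section Reindexing

variable {A ι ι' : Type*} [CommRing A] [Algebra ℂ A] [Fintype ι] [DecidableEq ι] [Fintype ι']
  [DecidableEq ι']

/-- Invariance of Koszul cohomology under an order-preserving reindexing of the family. -/
def opCohomologyKoszulDReindex (σ : ι ≃ ι') {enc : ι → ℤ} {enc' : ι' → ℤ}
    (henc : ∀ e f, enc' (σ e) < enc' (σ f) ↔ enc e < enc f) (z : ι' → A) :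
    opCohomology (koszulD z enc') ≃ₗ[ℂ] opCohomology (koszulD (z ∘ σ) enc) :=
  let φ : (Finset ι' → A) ≃ₗ[ℂ] (Finset ι → A) :=
    LinearEquiv.funCongrLeft ℂ A (Equiv.finsetCongr σ)
  have hφ : ∀ x, koszulD (z ∘ σ) enc (φ x) = φ (koszulD z enc' x) := fun x => by
    rw [koszulD_eq_koszulDiff, koszulD_eq_koszulDiff]
    exact funext fun s => koszulDiff_comp_equiv σ henc z x s
  opCohomologyEquiv φ.toLinearMap hφ
    (fun x _ ⟨y, hy⟩ => ⟨φ.symm y, φ.injective <| by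
      rw [← hφ, φ.apply_symm_apply]
      exact hy⟩)
    (fun y hy => ⟨φ.symm y, φ.injective <| by
      rw [← hφ, φ.apply_symm_apply, hy, map_zero], 0, by
      rw [map_zero, LinearEquiv.coe_coe, φ.apply_symm_apply, sub_self]⟩)

end Reindexing

section GradedPieces

variable {r : ℕ} {S : AddSubmonoid (Fin r → ℤ)} {Δfin : Finset ↥S}

variable (Δfin) in
/-- The weight function `m ↦ m · n` of the element `z_n`. -/
def pairing (n : Fin r → ℤ) (m : ↥Δfin) : ℤ :=
  ∑ i, m.val.val i * n i

variable (Δfin) in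
/-- The grading of `Δ` by `· n₀`. -/
def pairingGrade (n₀ : Fin r → ℤ) (m : ↥Δfin) : ↥(Igrades Δfin n₀) :=
  ⟨pairing Δfin n₀ m, Finset.mem_image.2 ⟨m.1, m.2, rfl⟩⟩

theorem pairingGrade_surjective (n₀ : Fin r → ℤ) : Function.Surjective (pairingGrade Δfin n₀) := by
  rintro ⟨j, hj⟩
  obtain ⟨m, hm, rfl⟩ := Finset.mem_image.1 hj
  exact ⟨⟨m, hm⟩, rfl⟩

/-- The weight function of the graded piece `z_{i,j}`: the `i`-th coordinate on the points of grade
`j`. -/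
def gradedCoord (n₀ : Fin r → ℤ) (e : Fin r × ↥(Igrades Δfin n₀)) (m : ↥Δfin) : ℤ :=
  if pairingGrade Δfin n₀ m = e.2 then m.val.val e.1 else 0

/-- The encoding of the lexicographic order on the pairs `(j, i)` that defines the signs of the
complex `W(f; n₀)`. -/
def gradedEnc (n₀ : Fin r → ℤ) (e : Fin r × ↥(Igrades Δfin n₀)) : ℤ :=
  (e.2 : ℤ) * r + (e.1 : ℤ)

theorem span_range_zEl (f : ↥Δfin → ℂ) :
    Ideal.span (Set.range (zEl Δfin f)) = jacobianIdeal Subtype.val f (pairing Δfin) := by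
  have hz : zEl Δfin f = fun n => weightedSum Subtype.val f (pairing Δfin n) := by
    funext n
    simp only [zEl, weightedSum, pairing, Finset.univ_eq_attach, AddMonoidAlgebra.smul_single,
      smul_eq_mul, mul_one]
  rw [hz, jacobianIdeal]

theorem zGraded_eq_weightedSum (f : ↥Δfin → ℂ) (n₀ : Fin r → ℤ) :
    zGraded Δfin f n₀ = fun e => weightedSum Subtype.val f (gradedCoord n₀ e) := by
  funext e
  rw [zGraded, weightedSum, Finset.univ_eq_attach, Finset.sum_filter]
  refine Finset.sum_congr rfl fun m _ => ?_
  have hgrade : ∑ k, m.val.val k * n₀ k = e.2 ↔ pairingGrade Δfin n₀ m = e.2 :=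
    (Subtype.ext_iff (a1 := pairingGrade Δfin n₀ m)).symm
  rw [AddMonoidAlgebra.smul_single, smul_eq_mul, mul_one, gradedCoord]
  by_cases hm : pairingGrade Δfin n₀ m = e.2
  · rw [if_pos hm, if_pos (hgrade.2 hm)]
  · rw [if_neg hm, if_neg (hgrade.not.2 hm), Int.cast_zero, mul_zero,
      AddMonoidAlgebra.single_zero]

theorem gradedEnc_lt_gradedEnc (n₀ : Fin r → ℤ) (e e' : Fin r × ↥(Igrades Δfin n₀)) :
    gradedEnc n₀ e < gradedEnc n₀ e' ↔ e.2 < e'.2 ∨ e.2 = e'.2 ∧ e.1 < e'.1 := by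
  rw [gradedEnc, gradedEnc, mul_add_coe_lt_mul_add_coe, Subtype.coe_lt_coe, Subtype.coe_inj]

theorem gradedEnc_injective (n₀ : Fin r → ℤ) :
    Function.Injective (gradedEnc n₀ : Fin r × ↥(Igrades Δfin n₀) → ℤ) := fun e e' h => by
  have hlt := (gradedEnc_lt_gradedEnc n₀ e e').not.1 h.not_lt
  have hgt := (gradedEnc_lt_gradedEnc n₀ e' e).not.1 h.symm.not_lt
  push Not at hlt hgt
  have hgrade : e.2 = e'.2 := le_antisymm hgt.1 hlt.1
  exact Prod.ext (le_antisymm (hgt.2 hgrade.symm) (hlt.2 hgrade)) hgrade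

theorem pairing_mem_closure_gradedCoord (n₀ n : Fin r → ℤ) :
    pairing Δfin n ∈ AddSubgroup.closure (Set.range (gradedCoord (Δfin := Δfin) n₀)) := by
  have hsum : pairing Δfin n = ∑ i, ∑ j, n i • gradedCoord n₀ (i, j) := by
    funext m
    simp only [pairing, Finset.sum_apply, Pi.smul_apply, gradedCoord, smul_ite, smul_zero,
      Finset.sum_ite_eq, Finset.mem_univ, if_true]
    exact Finset.sum_congr rfl fun i _ => mul_comm _ _
  rw [hsum]
  exact sum_mem fun i _ => sum_mem fun j _ =>
    zsmul_mem (AddSubgroup.subset_closure (Set.mem_range_self _)) _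

theorem nonempty_Wcoh_equiv {n₀ n₁ : Fin r → ℤ}
    (h : ∀ m m', pairingGrade Δfin n₀ m ≤ pairingGrade Δfin n₀ m' ↔
      pairingGrade Δfin n₁ m ≤ pairingGrade Δfin n₁ m')
    (f : ↥Δfin → ℂ) : Nonempty (Wcoh Δfin f n₁ ≃ₗ[ℂ] Wcoh Δfin f n₀) := by
  obtain ⟨τ, hτ⟩ := exists_orderIso_of_surjective (pairingGrade_surjective n₀)
    (pairingGrade_surjective n₁) h
  let σ := (Equiv.refl (Fin r)).prodCongr τ.toEquiv
  have henc : ∀ e e', gradedEnc n₁ (σ e) < gradedEnc n₁ (σ e') ↔ gradedEnc n₀ e < gradedEnc n₀ e' :=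
    fun e e' => by
      rw [gradedEnc_lt_gradedEnc, gradedEnc_lt_gradedEnc]
      exact or_congr τ.lt_iff_lt (and_congr_left' τ.injective.eq_iff)
  have hz : zGraded Δfin f n₁ ∘ σ = zGraded Δfin f n₀ := by
    rw [zGraded_eq_weightedSum, zGraded_eq_weightedSum]
    refine funext fun e => congrArg (weightedSum _ f) (funext fun m => ?_)
    have hgrade : pairingGrade Δfin n₁ m = (σ e).2 ↔ pairingGrade Δfin n₀ m = e.2 := by
      rw [← hτ]
      exact τ.injective.eq_iff
    simp only [gradedCoord, hgrade]
    rfl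
  unfold Wcoh
  rw [← hz]
  exact ⟨opCohomologyKoszulDReindex σ henc (zGraded Δfin f n₁)⟩

end GradedPieces

section StrongNondegeneracy

variable {r : ℕ} {S : AddSubmonoid (Fin r → ℤ)} {degd : Fin r → ℤ}

variable (S degd) in
/-- The degree `m ↦ m · degd` on the lattice points of the cone. -/
def degreeHom : ↥S →+ ℤ where
  toFun m := ∑ i, (m : Fin r → ℤ) i * degd i
  map_zero' := by simp
  map_add' m m' := by simp [add_mul, Finset.sum_add_distrib]

theorem degree_nonneg_of_isConeSemigroup {gens : Finset (Fin r → ℤ)}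
    (hcone : IsConeSemigroup r S gens) (hgor : ∀ g ∈ gens, ∑ i, g i * degd i = 1)
    {m : Fin r → ℤ} (hm : m ∈ S) : 0 ≤ ∑ i, m i * degd i := by
  obtain ⟨c, hc, hmc⟩ := (hcone m).1 hm
  have hdeg : ((∑ i, m i * degd i : ℤ) : ℚ) = ∑ g ∈ gens, c g := by
    push_cast
    simp only [hmc, Finset.sum_mul, mul_assoc]
    rw [Finset.sum_comm]
    refine Finset.sum_congr rfl fun g hg => ?_
    have hg₁ : ∑ i, (g i : ℚ) * degd i = 1 := by exact_mod_cast hgor g hg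
    rw [← Finset.mul_sum, hg₁, mul_one]
  have hnonneg : (0 : ℚ) ≤ (∑ i, m i * degd i : ℤ) := hdeg ▸ Finset.sum_nonneg hc
  exact_mod_cast hnonneg

variable {Δfin : Finset ↥S} (hdeg : ∀ m, 0 ≤ degreeHom S degd m)
  (hΔ : ∀ m : ↥Δfin, degreeHom S degd m = 1) {f₀ : ↥Δfin → ℂ}
  (hf₀ : FiniteDimensional ℂ (SGA r S ⧸ Ideal.span (Set.range (zEl Δfin f₀))))

include hdeg hΔ hf₀

theorem eventually_finiteDimensional_quotient_span_zEl :
    ∀ᶠ f in zariskiNhds f₀,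
      FiniteDimensional ℂ (SGA r S ⧸ Ideal.span (Set.range (zEl Δfin f))) := by
  rw [span_range_zEl] at hf₀
  filter_upwards [eventually_finiteDimensional_quotient_jacobianIdeal hdeg hΔ (f₀ := f₀)
    (a := pairing Δfin)] with f hf
  rwa [span_range_zEl]

theorem eventually_finrank_Wcoh_le (n₀ : Fin r → ℤ) :
    ∀ᶠ f in zariskiNhds f₀, FiniteDimensional ℂ (Wcoh Δfin f n₀) ∧
      Module.finrank ℂ (Wcoh Δfin f n₀) ≤ Module.finrank ℂ (Wcoh Δfin f₀ n₀) := by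
  rw [span_range_zEl] at hf₀
  filter_upwards [eventually_finrank_opCohomology_koszulD_le hdeg hΔ (f₀ := f₀)
    (gradedEnc_injective n₀) (pairing_mem_closure_gradedCoord n₀)] with f hf
  unfold Wcoh
  rw [zGraded_eq_weightedSum, zGraded_eq_weightedSum]
  exact hf

/-- `W(f; n₀)` depends on `n₀` only through the preorder it induces on `Δ`, and there are finitely
many of these. -/
theorem eventually_forall_finrank_Wcoh_le :
    ∀ᶠ f in zariskiNhds f₀, ∀ n₀, FiniteDimensional ℂ (Wcoh Δfin f n₀) ∧
      Module.finrank ℂ (Wcoh Δfin f n₀) ≤ Module.finrank ℂ (Wcoh Δfin f₀ n₀) := by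
  let preorderOf (n₀ : Fin r → ℤ) (m m' : ↥Δfin) : Prop :=
    pairingGrade Δfin n₀ m ≤ pairingGrade Δfin n₀ m'
  choose n hn using fun R : Set.range preorderOf => R.2
  filter_upwards [Filter.eventually_all.2 fun R =>
    eventually_finrank_Wcoh_le hdeg hΔ hf₀ (n R)] with f hf n₀
  have hequiv := nonempty_Wcoh_equiv fun m m' =>
    iff_of_eq (congrFun₂ (hn ⟨preorderOf n₀, n₀, rfl⟩).symm m m')
  obtain ⟨hfin, hle⟩ := hf ⟨preorderOf n₀, n₀, rfl⟩
  obtain ⟨e⟩ := hequiv f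
  obtain ⟨e₀⟩ := hequiv f₀
  rw [e.finrank_eq, e₀.finrank_eq] at hle
  exact ⟨e.finiteDimensional, hle⟩

end StrongNondegeneracy

theorem strongly_nondegenerate_is_zariski_open_general
    (r : ℕ) (S : AddSubmonoid (Fin r → ℤ)) (degd : Fin r → ℤ)
    (hdeg : ∀ m ∈ S, 0 ≤ ∑ i, m i * degd i) (Δfin : Finset ↥S)
    (hΔ : ∀ m ∈ Δfin, ∑ i, (m : Fin r → ℤ) i * degd i = 1) :
    ∃ P : Set (MvPolynomial ↥Δfin ℂ), ∀ f : ↥Δfin → ℂ,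
      IsStronglyNonDeg Δfin f ↔ ∃ p ∈ P, MvPolynomial.eval f p ≠ 0 := by
  have hnonneg : ∀ m, 0 ≤ degreeHom S degd m := fun m => hdeg m m.2
  have hdeg_one : ∀ m : ↥Δfin, degreeHom S degd m = 1 := fun m => hΔ m m.2
  refine exists_polynomials_iff_of_eventually fun f₀ ⟨hnondeg, hmin⟩ => ?_
  filter_upwards [eventually_finiteDimensional_quotient_span_zEl hnonneg hdeg_one hnondeg,
    eventually_forall_finrank_Wcoh_le hnonneg hdeg_one hnondeg] with f hf hW
  exact ⟨hf, fun n₀ => ⟨(hW n₀).1, fun g hg => (hW n₀).2.trans ((hmin n₀).2 g hg)⟩⟩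

/-- Strongly non-degenerate coefficient functions form a Zariski open
subset of the space `ℂ^Δ` of all coefficient functions: there is a collection `P` of
polynomials on `ℂ^Δ` such that `f` is strongly non-degenerate iff some `p ∈ P` satisfies
`p(f) ≠ 0`. -/
theorem strongly_nondegenerate_is_zariski_open
    (r : ℕ) (S : AddSubmonoid (Fin r → ℤ))
    (gens : Finset (Fin r → ℤ)) (hcone : IsConeSemigroup r S gens)
    (degd : Fin r → ℤ) (hgor : ∀ g ∈ gens, ∑ i, g i * degd i = 1)
    (Δfin : Finset ↥S)
    (hΔ : ∀ m : ↥S, m ∈ Δfin ↔ ∑ i, (m : Fin r → ℤ) i * degd i = 1) :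
    ∃ P : Set (MvPolynomial ↥Δfin ℂ), ∀ f : ↥Δfin → ℂ,
      IsStronglyNonDeg Δfin f ↔ ∃ p ∈ P, MvPolynomial.eval f p ≠ 0 :=
  strongly_nondegenerate_is_zariski_open_general r S degd
    (fun _ => degree_nonneg_of_isConeSemigroup hcone hgor) Δfin fun m => (hΔ m).1

end
end

section
/- Let C be a simplicial cone with lattice generators m₁,…,m_d of its rays, where d = rk M. Then the quotient of ℂ[C∩M] by the ideal generated by [m₁],…,[m_d] has ℂ-basis {[m] : m ∈ Box(C)}, where Box(C) is the set of lattice points of C whose coordinates in the basis m₁,…,m_d (over ℚ) all lie in [0,1). In particular the [m_i] form a regular sequence in ℂ[C∩M]. -/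
noncomputable section

/-!
In an additively cancellative monoid, whether a monomial lies in a monomial ideal, and whether it
is a nonzerodivisor modulo one, are questions about exponents only. For the lattice points of a
simplicial cone these questions are answered by coordinates: `m` is divisible by the generator
`vᵢ` inside the cone iff its `i`-th coordinate is at least `1`. Hence the monomials outside the
ideal `([v₁], …, [vₙ])` are those of the box, and `[vⱼ]` is regular modulo the other `[vᵢ]` because
adding `vⱼ` does not change the `i`-th coordinate.
-/

open AddMonoidAlgebra Set

section MonomialIdeal

variable {R T : Type*}

section Semiring

variable [Semiring R]

theorem isCompl_supported_compl (s : Set T) :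
    IsCompl (supported R R s) (supported R R sᶜ) := by
  have finsupp_isCompl : IsCompl (Finsupp.supported R R s) (Finsupp.supported R R sᶜ) :=
    ⟨Finsupp.disjoint_supported_supported disjoint_compl_right,
      Finsupp.codisjoint_supported_supported isCompl_compl.codisjoint⟩
  simp only [supported_eq_map]
  exact (Submodule.orderIsoMapComap (coeffLinearEquiv R).symm).isCompl finsupp_isCompl

theorem span_range_single_one (s : Set T) :
    Submodule.span R (range fun t : s => single (t : T) (1 : R)) = supported R R s := by
  rw [supported_eq_span_single R, image_eq_range]

variable [AddMonoid T] {G : Set T}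

variable (R) in
/-- The (left) ideal of `R[T]` generated by the monomials with exponent in `G`. Its exponents form
the semigroup ideal `AddSemigroupIdeal.closure G = T + G`. -/
def monomialIdeal (G : Set T) : Ideal R[T] :=
  Ideal.span (of' R T '' G)

theorem mem_monomialIdeal_iff {x : R[T]} :
    x ∈ monomialIdeal R G ↔ ∀ s, x.coeff s ≠ 0 → s ∈ AddSemigroupIdeal.closure G := by
  simp only [monomialIdeal, mem_ideal_span_of'_image, AddSemigroupIdeal.mem_closure'',
    Finsupp.mem_support_iff]
  grind

theorem one_mem_monomialIdeal_iff [Nontrivial R] :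
    (1 : R[T]) ∈ monomialIdeal R G ↔ 0 ∈ AddSemigroupIdeal.closure G := by
  classical
  simp [mem_monomialIdeal_iff, one_def, Finsupp.single_apply]

theorem monomialIdeal_range {ι : Type*} (g : ι → T) :
    monomialIdeal R (range g) = Ideal.span (range fun i => single (g i) (1 : R)) := by
  rw [monomialIdeal, ← range_comp]
  rfl

end Semiring

variable [CommRing R] [AddCommMonoid T] {G : Set T}

theorem ker_mkₐ_monomialIdeal :
    LinearMap.ker (Ideal.Quotient.mkₐ R (monomialIdeal R G)).toLinearMap =
      supported R R (AddSemigroupIdeal.closure G : Set T) := by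
  ext x
  simp only [LinearMap.mem_ker, AlgHom.toLinearMap_apply, Ideal.Quotient.mkₐ_eq_mk,
    Ideal.Quotient.eq_zero_iff_mem, mem_monomialIdeal_iff, mem_supported, Set.subset_def,
    Finsupp.mem_support_iff, SetLike.mem_coe]

theorem linearIndependent_mk_single_compl_closure :
    LinearIndependent R (fun b : ((AddSemigroupIdeal.closure G : Set T)ᶜ : Set T) =>
      Ideal.Quotient.mk (monomialIdeal R G) (single (b : T) 1)) := by
  have linearIndependent_single : LinearIndependent R
      fun b : ((AddSemigroupIdeal.closure G : Set T)ᶜ : Set T) => single (b : T) (1 : R) :=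
    (AddMonoidAlgebra.basis T R).linearIndependent.comp _ Subtype.val_injective
  refine linearIndependent_single.map
    (f := (Ideal.Quotient.mkₐ R (monomialIdeal R G)).toLinearMap) ?_
  rw [ker_mkₐ_monomialIdeal, span_range_single_one]
  exact (isCompl_supported_compl _).symm.disjoint

theorem span_mk_single_compl_closure_eq_top :
    Submodule.span R (range fun b : ((AddSemigroupIdeal.closure G : Set T)ᶜ : Set T) =>
      Ideal.Quotient.mk (monomialIdeal R G) (single (b : T) 1)) = ⊤ := by
  let π := (Ideal.Quotient.mkₐ R (monomialIdeal R G)).toLinearMap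
  have hπ : LinearMap.range π = ⊤ := LinearMap.range_eq_top.2 Ideal.Quotient.mk_surjective
  have map_supported :
      (supported R R (AddSemigroupIdeal.closure G : Set T)ᶜ).map π = ⊤ := by
    rw [LinearMap.map_eq_top_iff hπ, ker_mkₐ_monomialIdeal]
    exact (isCompl_supported_compl _).symm.sup_eq_top
  rwa [← span_range_single_one, Submodule.map_span, ← range_comp] at map_supported

theorem isSMulRegular_quotient_monomialIdeal [IsCancelAdd T] {g : T}
    (hg : ∀ s, g + s ∈ AddSemigroupIdeal.closure G → s ∈ AddSemigroupIdeal.closure G) :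
    IsSMulRegular (R[T] ⧸ monomialIdeal R G) (single g (1 : R)) := by
  rw [isSMulRegular_quotient_iff_mem_of_smul_mem]
  intro x hx
  rw [mem_monomialIdeal_iff] at hx ⊢
  refine fun s hs => hg s (hx _ ?_)
  rwa [smul_eq_mul, coeff_single_mul_add, one_mul]

theorem ideal_ofList_ofFn {A : Type*} [Semiring A] {n : ℕ} (f : Fin n → A) :
    Ideal.ofList (List.ofFn f) = Ideal.span (range f) := by
  simp only [Ideal.ofList, List.mem_ofFn, range]

theorem ideal_ofList_take_ofFn {A : Type*} [Semiring A] {n : ℕ} (f : Fin n → A) (i : Fin n) :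
    Ideal.ofList ((List.ofFn f).take i) = Ideal.span (f '' Iio i) := by
  refine congrArg Ideal.span (Set.ext fun r => ?_)
  simp only [List.mem_take_iff_getElem, List.getElem_ofFn, List.length_ofFn, mem_ofPred_eq,
    mem_image, mem_Iio, Fin.exists_iff, Fin.lt_def]
  grind

theorem isRegular_ofFn_single [Nontrivial R] [IsCancelAdd T] {n : ℕ} {g : Fin n → T}
    (zero_notMem : 0 ∉ AddSemigroupIdeal.closure (range g))
    (mem_of_add_mem : ∀ i s, g i + s ∈ AddSemigroupIdeal.closure (g '' Iio i) →
      s ∈ AddSemigroupIdeal.closure (g '' Iio i)) :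
    RingTheory.Sequence.IsRegular R[T] (List.ofFn fun i => single (g i) (1 : R)) where
  regular_mod_prev i hi := by
    lift i to Fin n using by simpa using hi
    rw [ideal_ofList_take_ofFn, smul_eq_mul, Ideal.mul_top, List.getElem_ofFn,
      ← image_image (fun t => single t (1 : R))]
    exact isSMulRegular_quotient_monomialIdeal (mem_of_add_mem i)
  top_ne_smul := by
    rw [ideal_ofList_ofFn, smul_eq_mul, Ideal.mul_top, ← monomialIdeal_range, ne_comm,
      Ideal.ne_top_iff_one, one_mem_monomialIdeal_iff]
    exact zero_notMem

end MonomialIdeal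

section LatticeCone

variable {ι K V M : Type*} [Fintype ι] [Ring K] [LinearOrder K] [IsStrictOrderedRing K]
  [AddCommGroup V] [Module K V] [AddCommGroup M]

variable (K) in
/-- The lattice points of the cone generated by `v`: the elements of `M` whose image in the ambient
space `V` (for a lattice `M`, typically `M ⊗ ℚ`) is a nonnegative combination of the `φ (v i)`. -/
def latticeCone (φ : M →+ V) (v : ι → M) : AddSubmonoid M where
  carrier := {m | ∃ a : ι → K, (∀ i, 0 ≤ a i) ∧ φ m = Fintype.linearCombination K (φ ∘ v) a}
  zero_mem' := ⟨0, fun _ => le_rfl, by simp⟩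
  add_mem' := by
    rintro m m' ⟨a, ha, hm⟩ ⟨a', ha', hm'⟩
    exact ⟨a + a', fun i => add_nonneg (ha i) (ha' i), by rw [map_add, map_add, hm, hm']⟩

variable (K) in
/-- The box of the cone generated by `v`: its lattice points with all coordinates in `[0, 1)`. -/
def latticeBox (φ : M →+ V) (v : ι → M) : Set (latticeCone K φ v) :=
  {m | ∃ a : ι → K, (∀ i, 0 ≤ a i ∧ a i < 1) ∧ φ m = Fintype.linearCombination K (φ ∘ v) a}

variable {φ : M →+ V} {v : ι → M}

variable (K φ v) in
/-- The generators of the cone, as elements of its monoid of lattice points. -/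
def latticeCone.gen (i : ι) : latticeCone K φ v :=
  ⟨v i, by
    classical
    exact ⟨Pi.single i 1, Pi.single_nonneg.2 zero_le_one, by simp⟩⟩

theorem mem_closure_gen_iff (hv : LinearIndependent K (φ ∘ v)) {J : Set ι} {m : latticeCone K φ v}
    {a : ι → K} (ha : ∀ i, 0 ≤ a i) (hm : φ m = Fintype.linearCombination K (φ ∘ v) a) :
    m ∈ AddSemigroupIdeal.closure (latticeCone.gen K φ v '' J) ↔ ∃ i ∈ J, 1 ≤ a i := by
  classical
  rw [AddSemigroupIdeal.mem_closure'']
  constructor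
  · rintro ⟨t, -, ⟨i, hi, rfl⟩, rfl⟩
    obtain ⟨b, hb, ht⟩ := t.2
    have coords_eq : a = b + Pi.single i 1 :=
      hv.fintypeLinearCombination_injective <| hm.symm.trans <| by
        simp [latticeCone.gen, ht]
    exact ⟨i, hi, by simpa [coords_eq] using hb i⟩
  · rintro ⟨i, hi, one_le⟩
    have sub_mem : (m : M) - v i ∈ latticeCone K φ v := by
      refine ⟨a - Pi.single i 1, fun j => ?_, by simp [hm]⟩
      obtain rfl | hj := eq_or_ne j i
      · simpa using one_le
      · simpa [hj] using ha j
    exact ⟨⟨_, sub_mem⟩, _, mem_image_of_mem _ hi, Subtype.ext (sub_add_cancel _ _)⟩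

theorem latticeBox_eq_compl_closure (hv : LinearIndependent K (φ ∘ v)) :
    latticeBox K φ v =
      (AddSemigroupIdeal.closure (range (latticeCone.gen K φ v)) : Set (latticeCone K φ v))ᶜ := by
  ext m
  obtain ⟨a, ha, hm⟩ := m.2
  have mem_box : m ∈ latticeBox K φ v ↔ ∀ i, a i < 1 := by
    constructor
    · rintro ⟨b, hb, hmb⟩ i
      rw [hv.fintypeLinearCombination_injective (hm.symm.trans hmb)]
      exact (hb i).2
    · exact fun h => ⟨a, fun i => ⟨ha i, h i⟩, hm⟩
  rw [mem_box, mem_compl_iff, SetLike.mem_coe, ← image_univ, mem_closure_gen_iff hv ha hm]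
  simp

theorem zero_notMem_closure_gen (hv : LinearIndependent K (φ ∘ v)) :
    0 ∉ AddSemigroupIdeal.closure (range (latticeCone.gen K φ v)) := by
  rw [← image_univ, mem_closure_gen_iff hv (a := 0) (fun _ => le_rfl) (by simp)]
  simp

theorem mem_closure_gen_of_gen_add_mem (hv : LinearIndependent K (φ ∘ v)) {J : Set ι} {j : ι}
    (hj : j ∉ J) {m : latticeCone K φ v}
    (hm : latticeCone.gen K φ v j + m ∈
      AddSemigroupIdeal.closure (latticeCone.gen K φ v '' J)) :
    m ∈ AddSemigroupIdeal.closure (latticeCone.gen K φ v '' J) := by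
  classical
  obtain ⟨a, ha, hma⟩ := m.2
  have coords_nonneg : ∀ i, 0 ≤ (Pi.single j 1 + a : ι → K) i :=
    Pi.le_def.1 (add_nonneg (Pi.single_nonneg.2 zero_le_one) (Pi.le_def.2 ha))
  rw [mem_closure_gen_iff hv coords_nonneg (by simp [latticeCone.gen, hma])] at hm
  rw [mem_closure_gen_iff hv ha hma]
  obtain ⟨i, hi, one_le⟩ := hm
  have hij : i ≠ j := ne_of_mem_of_not_mem hi hj
  exact ⟨i, hi, by simpa [hij] using one_le⟩

theorem box_basis_and_regular_sequence_general {R : Type*} [CommRing R] [Nontrivial R] {n : ℕ}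
    {v : Fin n → M} (hv : LinearIndependent K (φ ∘ v)) :
    (LinearIndependent R (fun b : latticeBox K φ v =>
        Ideal.Quotient.mk (Ideal.span (range fun i => single (latticeCone.gen K φ v i) (1 : R)))
          (single (b : latticeCone K φ v) 1)) ∧
      ⊤ ≤ Submodule.span R (range fun b : latticeBox K φ v =>
        Ideal.Quotient.mk (Ideal.span (range fun i => single (latticeCone.gen K φ v i) (1 : R)))
          (single (b : latticeCone K φ v) 1))) ∧
    RingTheory.Sequence.IsRegular R[latticeCone K φ v]
      (List.ofFn fun i => single (latticeCone.gen K φ v i) (1 : R)) := by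
  rw [latticeBox_eq_compl_closure hv, ← monomialIdeal_range]
  exact ⟨⟨linearIndependent_mk_single_compl_closure, span_mk_single_compl_closure_eq_top.ge⟩,
    isRegular_ofFn_single (zero_notMem_closure_gen hv) fun _ _ =>
      mem_closure_gen_of_gen_add_mem hv self_notMem_Iio⟩

end LatticeCone

section IntegerPoints

variable {ι κ K : Type*} [Fintype ι] [Ring K]

theorem intCast_compLeft_eq_linearCombination_iff {v : ι → κ → ℤ} {m : κ → ℤ} {a : ι → K} :
    (Int.castAddHom K).compLeft κ m =
        Fintype.linearCombination K ((Int.castAddHom K).compLeft κ ∘ v) a ↔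
      ∀ k, (m k : K) = ∑ i, a i * v i k := by
  simp [funext_iff, Fintype.linearCombination_apply]

variable [LinearOrder K] [IsStrictOrderedRing K]

theorem mem_latticeCone_intCast_iff {v : ι → κ → ℤ} {m : κ → ℤ} :
    m ∈ latticeCone K ((Int.castAddHom K).compLeft κ) v ↔
      ∃ a : ι → K, (∀ i, 0 ≤ a i) ∧ ∀ k, (m k : K) = ∑ i, a i * v i k := by
  simp only [← intCast_compLeft_eq_linearCombination_iff]
  rfl

theorem latticeBox_intCast_eq (v : ι → κ → ℤ) :
    latticeBox K ((Int.castAddHom K).compLeft κ) v =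
      {m : latticeCone K _ v | ∃ a : ι → K, (∀ i, 0 ≤ a i ∧ a i < 1) ∧
        ∀ k, ((m : κ → ℤ) k : K) = ∑ i, a i * v i k} := by
  simp only [← intCast_compLeft_eq_linearCombination_iff]
  rfl

end IntegerPoints

/-- Let `C ⊆ M_ℚ` (`M = ℤ^d`) be a full-dimensional simplicial cone
with (primitive) ray generators `m₁,…,m_d`, linearly independent over `ℚ`, and let
`S = C ∩ M` be its semigroup of lattice points.  Then the quotient of `ℂ[C ∩ M]` by the
ideal generated by the monomials `[m₁],…,[m_d]` has the images of the monomials `[b]`,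
`b ∈ Box(C)`, as a `ℂ`-basis, where `Box(C)` is the set of lattice points of `C` whose
coordinates in the basis `m₁,…,m_d` (over `ℚ`) all lie in `[0,1)`.  In particular the
`[m_i]` form a regular sequence in `ℂ[C ∩ M]`. -/
theorem box_basis_and_regular_sequence
    (d : ℕ) (mgen : Fin d → Fin d → ℤ)
    (hindep : LinearIndependent ℚ (fun i => fun k => (mgen i k : ℚ)))
    (S : AddSubmonoid (Fin d → ℤ))
    (hS : ∀ m : Fin d → ℤ, m ∈ S ↔ ∃ a : Fin d → ℚ,
      (∀ i, 0 ≤ a i) ∧ ∀ k, (m k : ℚ) = ∑ i, a i * mgen i k)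
    (hmem : ∀ i, mgen i ∈ S) :
    -- the images of the box monomials form a basis of the quotient:
    (LinearIndependent ℂ (fun b : { m : ↥S // ∃ a : Fin d → ℚ,
        (∀ i, 0 ≤ a i ∧ a i < 1) ∧ ∀ k, ((m : Fin d → ℤ) k : ℚ) = ∑ i, a i * mgen i k } =>
      Ideal.Quotient.mk
        (Ideal.span (Set.range fun i : Fin d =>
          AddMonoidAlgebra.single (⟨mgen i, hmem i⟩ : ↥S) (1 : ℂ)))
        (AddMonoidAlgebra.single ((b : ↥S)) (1 : ℂ))) ∧
     ⊤ ≤ Submodule.span ℂ (Set.range fun b : { m : ↥S // ∃ a : Fin d → ℚ,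
        (∀ i, 0 ≤ a i ∧ a i < 1) ∧ ∀ k, ((m : Fin d → ℤ) k : ℚ) = ∑ i, a i * mgen i k } =>
      Ideal.Quotient.mk
        (Ideal.span (Set.range fun i : Fin d =>
          AddMonoidAlgebra.single (⟨mgen i, hmem i⟩ : ↥S) (1 : ℂ)))
        (AddMonoidAlgebra.single ((b : ↥S)) (1 : ℂ)))) ∧
    -- the monomials `[m_i]` form a regular sequence:
    RingTheory.Sequence.IsRegular (AddMonoidAlgebra ℂ ↥S)
      (List.ofFn fun i : Fin d =>
        (AddMonoidAlgebra.single (⟨mgen i, hmem i⟩ : ↥S) (1 : ℂ) :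
          AddMonoidAlgebra ℂ ↥S)) := by
  obtain rfl : S = latticeCone ℚ ((Int.castAddHom ℚ).compLeft (Fin d)) mgen :=
    SetLike.ext fun m => (hS m).trans mem_latticeCone_intCast_iff.symm
  have h := box_basis_and_regular_sequence_general (R := ℂ) (K := ℚ) (v := mgen)
    (φ := (Int.castAddHom ℚ).compLeft (Fin d)) hindep
  rwa [latticeBox_intCast_eq] at h

end
end
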